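/- Let a, b, c be integers with 2 < a ≤ b ≤ c, and let k be a positive integer with k ≤ (a+1)(b+1)(c+1)/(a+b+c+1) − c − 1. Then the Segre product ℙ^a × ℙ^b × ℙ^c (tensors in ℂ^{a+1} ⊗ ℂ^{b+1} ⊗ ℂ^{c+1}) is k-identifiable. -/

import Mathlib

open scoped TensorProduct
open PiTensorProduct

noncomputable section

/-- The space of tensors `V = ℂ^{a₁+1} ⊗ ⋯ ⊗ ℂ^{a_q+1}`. -/
abbrev Ten (q : ℕ) (a : Fin q → ℕ) : Type :=
  ⨂[ℂ] i : Fin q, (Fin (a i + 1) → ℂ)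

/-- Index type for the coordinates on the parameter space `W_k`. -/
abbrev WIdx (q : ℕ) (a : Fin q → ℕ) (k : ℕ) : Type :=
  Fin k × Σ j : Fin q, Fin (a j + 1)

/-- Index type for the standard (decomposable) basis of `Ten q a`. -/
abbrev BIdx (q : ℕ) (a : Fin q → ℕ) : Type := ∀ j : Fin q, Fin (a j + 1)

/-- A tensor is decomposable if it is `v₁ ⊗ ⋯ ⊗ v_q` with all `vᵢ ≠ 0`. -/
def IsDecomposable {q : ℕ} {a : Fin q → ℕ} (t : Ten q a) : Prop :=
  ∃ v : ∀ j : Fin q, Fin (a j + 1) → ℂ, (∀ j, v j ≠ 0) ∧ t = tprod ℂ v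

/-- The affine tangent space at `v₁ ⊗ ⋯ ⊗ v_q` to the cone over the Segre variety:
the span of all tensors obtained by replacing one factor of `v` by an arbitrary vector. -/
def tangent {q : ℕ} (a : Fin q → ℕ) (v : ∀ j : Fin q, Fin (a j + 1) → ℂ) :
    Submodule ℂ (Ten q a) :=
  Submodule.span ℂ
    {x | ∃ (j : Fin q) (u : Fin (a j + 1) → ℂ), x = tprod ℂ (Function.update v j u)}

/-- The map `Φ : W_k → V` sending a `k`-tuple of factor vectors to the sum of the
corresponding decomposable tensors. -/
def Phi {q : ℕ} (a : Fin q → ℕ) {k : ℕ}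
    (p : Fin k → ∀ j : Fin q, Fin (a j + 1) → ℂ) : Ten q a :=
  ∑ i, tprod ℂ (p i)

/-- Evaluation of a polynomial function on `W_k` at a parameter point. -/
def evalW {q : ℕ} {a : Fin q → ℕ} {k : ℕ}
    (F : MvPolynomial (WIdx q a k) ℂ)
    (p : Fin k → ∀ j : Fin q, Fin (a j + 1) → ℂ) : ℂ :=
  MvPolynomial.eval (fun x => p x.1 x.2.1 x.2.2) F

/-- `k`-identifiability of the Segre product `ℙ^{a₁} × ⋯ × ℙ^{a_q}`:
there is a nonzero polynomial function `F` on `W_k` such that whenever `F(p) ≠ 0`,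
the tensor `Φ(p)` has a rank-`k` decomposition, and any two rank-`k` decompositions
of `Φ(p)` agree as multisets of decomposable tensors. -/
def Identifiable (q : ℕ) (a : Fin q → ℕ) (k : ℕ) : Prop :=
  ∃ F : MvPolynomial (WIdx q a k) ℂ,
    (∃ p, evalW F p ≠ 0) ∧
    ∀ p, evalW F p ≠ 0 →
      ((∃ t : Fin k → Ten q a, (∀ i, IsDecomposable (t i)) ∧ ∑ i, t i = Phi a p) ∧
       ∀ s t : Fin k → Ten q a,
         (∀ i, IsDecomposable (s i)) → (∀ i, IsDecomposable (t i)) →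
         ∑ i, s i = Phi a p → ∑ i, t i = Phi a p →
         Finset.univ.val.map s = Finset.univ.val.map t)

/-- The standard decomposable basis vector of `Ten q a` indexed by `f`. -/
def basisVec {q : ℕ} (a : Fin q → ℕ) (f : BIdx q a) : Ten q a :=
  tprod ℂ fun j => Pi.single (f j) 1

/-- The vector of `Ten q a` with coordinates `c` in the standard basis. -/
def fromCoords {q : ℕ} (a : Fin q → ℕ) (c : BIdx q a → ℂ) : Ten q a :=
  ∑ f : BIdx q a, c f • basisVec a f

/-- Evaluation of a polynomial function on `W_k × V^e` at a parameter point. -/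
def evalWV {q : ℕ} {a : Fin q → ℕ} {k e : ℕ}
    (F : MvPolynomial (WIdx q a k ⊕ (Fin e × BIdx q a)) ℂ)
    (p : Fin k → ∀ j : Fin q, Fin (a j + 1) → ℂ)
    (c : Fin e → BIdx q a → ℂ) : ℂ :=
  MvPolynomial.eval (Sum.elim (fun x => p x.1 x.2.1 x.2.2) (fun y => c y.1 y.2)) F

/-- `TangentGeneral q a k d` says: the general linear subspace of `V` of dimension `d`
which is tangent to the Segre at `k` general points is tangent only at those points.
Concretely, with `e = d - k(1 + Σᵢ aᵢ)`, there is a nonzero polynomial function `F` on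
`W_k × V^e` such that whenever `F ≠ 0` at `(p, c)`, the space `L` spanned by the tangent
spaces at the `k` decomposable tensors determined by `p` together with the `e` extra
vectors determined by `c` has dimension exactly `d`, and any decomposable tensor whose
tangent space lies in `L` is a scalar multiple of one of the `k` given ones. -/
def TangentGeneral (q : ℕ) (a : Fin q → ℕ) (k d : ℕ) : Prop :=
  ∃ F : MvPolynomial (WIdx q a k ⊕ (Fin (d - k * (1 + ∑ j, a j)) × BIdx q a)) ℂ,
    (∃ p c, evalWV F p c ≠ 0) ∧
    ∀ p c, evalWV F p c ≠ 0 →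
      (Module.finrank ℂ
          ↥((⨆ i, tangent a (p i)) ⊔
            Submodule.span ℂ (Set.range fun m => fromCoords a (c m))) = d ∧
       ∀ w : ∀ j : Fin q, Fin (a j + 1) → ℂ, (∀ j, w j ≠ 0) →
         tangent a w ≤
           (⨆ i, tangent a (p i)) ⊔
             Submodule.span ℂ (Set.range fun m => fromCoords a (c m)) →
         ∃ (i : Fin k) (t : ℂ), tprod ℂ w = t • tprod ℂ (p i))

/-!
Call a configuration of `k` points of the Segre variety good if its tangent spaces are independent
and the only points whose tangent space lies in the span of these are the given ones, each of them
reduced. By a valuative argument this property passes from a special configuration to the generic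
one. In the special configuration the third factor is split into blocks of size at most two, and in
each block all points without a component there degenerate to fibres `u ⊗ v ⊗ K^γ`. The remaining
points lie on a diagonal of the grid of pairs of basis vectors of the first two factors, the fibres
lie on cells away from it, and counting the cells that are available gives the bound on `k`.

If the generic tensor has a second decomposition, then differentiating the equation between the two
and comparing dimensions shows that both have the same span of tangent spaces, so that the points of
the second are among those of the first. An ultraproduct over the exceptional points turns this
statement about the generic tensor over a large field into one about general tensors over `ℂ`.
-/

namespace SegreContact

section SegreCone

variable {ι α β γ R : Type*} [CommRing R]

/-- The decomposable tensor `u ⊗ v ⊗ w` in coordinates. A point of the parameter space, that is the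
triple of factors `(u, v, w)`, is encoded as a single function on `α ⊕ β ⊕ γ`. -/
def segre (Q : α ⊕ β ⊕ γ → R) : α × β × γ → R :=
  fun x => Q (.inl x.1) * Q (.inr (.inl x.2.1)) * Q (.inr (.inr x.2.2))

/-- The first factor of a point. -/
abbrev left (Q : α ⊕ β ⊕ γ → R) : α → R := fun x => Q (.inl x)

/-- The second factor of a point. -/
abbrev mid (Q : α ⊕ β ⊕ γ → R) : β → R := fun y => Q (.inr (.inl y))

/-- The third factor of a point. -/
abbrev right (Q : α ⊕ β ⊕ γ → R) : γ → R := fun z => Q (.inr (.inr z))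

/-- The differential of `segre` at `Q`; its range is the affine tangent space to the Segre cone. -/
def segreDeriv (Q : α ⊕ β ⊕ γ → R) : (α ⊕ β ⊕ γ → R) →ₗ[R] (α × β × γ → R) where
  toFun E x :=
    E (.inl x.1) * Q (.inr (.inl x.2.1)) * Q (.inr (.inr x.2.2)) +
    Q (.inl x.1) * E (.inr (.inl x.2.1)) * Q (.inr (.inr x.2.2)) +
    Q (.inl x.1) * Q (.inr (.inl x.2.1)) * E (.inr (.inr x.2.2))
  map_add' E E' := by
    ext x
    simp only [Pi.add_apply]
    ring
  map_smul' c E := by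
    ext x
    simp only [Pi.smul_apply, smul_eq_mul, RingHom.id_apply]
    ring

/-- The three factors of a point, multiplied by three scalars. -/
def rescale (l m n : R) (Q : α ⊕ β ⊕ γ → R) : α ⊕ β ⊕ γ → R :=
  Sum.elim (l • left Q) (Sum.elim (m • mid Q) (n • right Q))

theorem segreDeriv_apply (Q E : α ⊕ β ⊕ γ → R) (x : α × β × γ) :
    segreDeriv Q E x =
      E (.inl x.1) * Q (.inr (.inl x.2.1)) * Q (.inr (.inr x.2.2)) +
      Q (.inl x.1) * E (.inr (.inl x.2.1)) * Q (.inr (.inr x.2.2)) +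
      Q (.inl x.1) * Q (.inr (.inl x.2.1)) * E (.inr (.inr x.2.2)) :=
  rfl

@[simp] theorem rescale_inl (l m n : R) (Q : α ⊕ β ⊕ γ → R) (x : α) :
    rescale l m n Q (.inl x) = l * Q (.inl x) :=
  rfl

@[simp] theorem rescale_inr_inl (l m n : R) (Q : α ⊕ β ⊕ γ → R) (y : β) :
    rescale l m n Q (.inr (.inl y)) = m * Q (.inr (.inl y)) :=
  rfl

@[simp] theorem rescale_inr_inr (l m n : R) (Q : α ⊕ β ⊕ γ → R) (z : γ) :
    rescale l m n Q (.inr (.inr z)) = n * Q (.inr (.inr z)) :=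
  rfl

theorem rescale_rescale (a b c a' b' c' : R) (Q : α ⊕ β ⊕ γ → R) :
    rescale a b c (rescale a' b' c' Q) = rescale (a * a') (b * b') (c * c') Q := by
  ext s
  rcases s with x | y | z <;> simp [mul_assoc]

theorem rescale_comp {S : Type*} [CommRing S] (f : R →+* S) (a b c : R) (Q : α ⊕ β ⊕ γ → R) :
    f ∘ rescale a b c Q = rescale (f a) (f b) (f c) (f ∘ Q) := by
  ext s
  rcases s with x | y | z <;> simp

theorem eq_rescale_inv_of_rescale_eq {K : Type*} [Field K] {a b c : K} (ha : a ≠ 0) (hb : b ≠ 0)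
    (hc : c ≠ 0) {Q Q' : α ⊕ β ⊕ γ → K} (h : rescale a b c Q = Q') :
    Q = rescale a⁻¹ b⁻¹ c⁻¹ Q' := by
  subst h
  ext s
  rcases s with x | y | z <;> simp [ha, hb, hc]

theorem segre_rescale (l m n : R) (Q : α ⊕ β ⊕ γ → R) :
    segre (rescale l m n Q) = (l * m * n) • segre Q := by
  ext x
  simp only [segre, rescale_inl, rescale_inr_inl, rescale_inr_inr, Pi.smul_apply, smul_eq_mul]
  ring

theorem segreDeriv_rescale (Q : α ⊕ β ⊕ γ → R) (l m n : R) :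
    segreDeriv Q (rescale l m n Q) = (l + m + n) • segre Q := by
  ext x
  simp only [segreDeriv_apply, segre, rescale_inl, rescale_inr_inl, rescale_inr_inr,
    Pi.smul_apply, smul_eq_mul]
  ring

theorem segreDeriv_rescale_left (Q E : α ⊕ β ⊕ γ → R) (l m n : R) :
    segreDeriv (rescale l m n Q) E = segreDeriv Q (rescale (m * n) (l * n) (l * m) E) := by
  ext x
  simp only [segreDeriv_apply, rescale_inl, rescale_inr_inl, rescale_inr_inr]
  ring

theorem segreDeriv_comp {S : Type*} [CommRing S] (f : R →+* S) (Q E : α ⊕ β ⊕ γ → R) :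
    segreDeriv (f ∘ Q) (f ∘ E) = f ∘ segreDeriv Q E := by
  ext x
  simp [segreDeriv_apply]

/-- The second differential of `segre` at `Q` in the direction `D`. -/
abbrev segreHess (Q D : α ⊕ β ⊕ γ → R) : (α ⊕ β ⊕ γ → R) →ₗ[R] (α × β × γ → R) :=
  QuadraticMap.polar segreDeriv Q D

theorem segreHess_apply (Q D E : α ⊕ β ⊕ γ → R) (x : α × β × γ) :
    segreHess Q D E x =
      E (.inl x.1) * (D (.inr (.inl x.2.1)) * Q (.inr (.inr x.2.2)) +
        Q (.inr (.inl x.2.1)) * D (.inr (.inr x.2.2))) +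
      E (.inr (.inl x.2.1)) * (D (.inl x.1) * Q (.inr (.inr x.2.2)) +
        Q (.inl x.1) * D (.inr (.inr x.2.2))) +
      E (.inr (.inr x.2.2)) * (D (.inl x.1) * Q (.inr (.inl x.2.1)) +
        Q (.inl x.1) * D (.inr (.inl x.2.1))) := by
  simp only [segreHess, QuadraticMap.polar, LinearMap.sub_apply, Pi.sub_apply, segreDeriv_apply,
    Pi.add_apply]
  ring

theorem segreHess_sub_rescale (Q D E : α ⊕ β ⊕ γ → R) (l m n : R) :
    segreHess Q (D - rescale l m n Q) E =
      segreHess Q D E - segreDeriv Q (rescale (m + n) (l + n) (l + m) E) := by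
  ext x
  simp only [segreHess_apply, segreDeriv_apply, Pi.sub_apply, rescale_inl, rescale_inr_inl,
    rescale_inr_inr]
  ring

theorem segreHess_smul (c : R) (Q D E : α ⊕ β ⊕ γ → R) :
    segreHess Q (c • D) E = c • segreHess Q D E := by
  ext x
  simp only [segreHess_apply, Pi.smul_apply, smul_eq_mul]
  ring

theorem segreHess_comp {S : Type*} [CommRing S] (f : R →+* S) (Q D E : α ⊕ β ⊕ γ → R) :
    segreHess (f ∘ Q) (f ∘ D) (f ∘ E) = f ∘ segreHess Q D E := by
  ext x
  simp [segreHess_apply]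

theorem segreDeriv_add_smul (Q D E : α ⊕ β ⊕ γ → R) (ε : R) :
    segreDeriv (Q + ε • D) E - segreDeriv Q E =
      ε • (segreHess Q D E + ε • segreDeriv D E) := by
  ext x
  simp only [segreHess_apply, segreDeriv_apply, Pi.sub_apply, Pi.add_apply, Pi.smul_apply,
    smul_eq_mul]
  ring

end SegreCone

section TangentMap

variable {ι α β γ R : Type*} [CommRing R] [Fintype ι]

/-- The map from the sum of the tangent spaces to the Segre cone at the points `P i`, seen as
abstract spaces, to the space of tensors. -/
def tangentMap (P : ι → α ⊕ β ⊕ γ → R) : (ι → α ⊕ β ⊕ γ → R) →ₗ[R] (α × β × γ → R) :=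
  ∑ i, segreDeriv (P i) ∘ₗ LinearMap.proj i

theorem tangentMap_apply (P D : ι → α ⊕ β ⊕ γ → R) :
    tangentMap P D = ∑ i, segreDeriv (P i) (D i) := by
  simp [tangentMap]

theorem range_segreDeriv_le (P : ι → α ⊕ β ⊕ γ → R) (i : ι) :
    LinearMap.range (segreDeriv (P i)) ≤ LinearMap.range (tangentMap P) := by
  classical
  rintro _ ⟨E, rfl⟩
  refine ⟨Pi.single i E, ?_⟩
  rw [tangentMap_apply, Finset.sum_eq_single i (fun j _ hj => by simp [hj]) (by simp),
    Pi.single_eq_same]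

/-- A configuration `P` with its entries mapped along a ring homomorphism. -/
abbrev mapConfig {σ S : Type*} [CommRing S] (f : R →+* S) (P : ι → σ → R) : ι → σ → S :=
  fun i => f ∘ P i

theorem tangentMap_mapConfig {S : Type*} [CommRing S] (f : R →+* S) (P D : ι → α ⊕ β ⊕ γ → R) :
    tangentMap (mapConfig f P) (mapConfig f D) = f ∘ tangentMap P D := by
  ext x
  simp [tangentMap_apply, segreDeriv_comp]

/-- The tangent space to the Segre cone at `Q` lies in the span of the tangent spaces at the
points `P i`. -/
def IsContact (P : ι → α ⊕ β ⊕ γ → R) (Q : α ⊕ β ⊕ γ → R) : Prop :=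
  LinearMap.range (segreDeriv Q) ≤ LinearMap.range (tangentMap P)

/-- The first order deformation of the point `P i` in the direction `D` satisfies `IsContact` to
first order. -/
def IsContactDir (P : ι → α ⊕ β ⊕ γ → R) (i : ι) (D : α ⊕ β ⊕ γ → R) : Prop :=
  LinearMap.range (segreHess (P i) D) ≤ LinearMap.range (tangentMap P)

/-- The tangent spaces at the points `P i` are as independent as possible: the only relations are
those between the three copies of `P i` in its own tangent space. When the third factor of `P i`
vanishes, `segreDeriv (P i)` only depends on the third component, and that one has to be
determined. -/
def IsIndep (P : ι → α ⊕ β ⊕ γ → R) : Prop :=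
  ∀ D, tangentMap P D = 0 → ∀ i, (right (P i) = 0 → right (D i) = 0) ∧
    (right (P i) ≠ 0 → ∃ l m n : R, l + m + n = 0 ∧ D i = rescale l m n (P i))

/-- The tangent spaces at the points `P i` are as independent as possible, and the contact locus of
their span with the Segre variety consists exactly of the points `P i` with nonzero third factor,
each of them reduced. -/
structure Good (P : ι → α ⊕ β ⊕ γ → R) : Prop where
  indep : IsIndep P
  contact : ∀ Q, left Q ≠ 0 → mid Q ≠ 0 → right Q ≠ 0 → IsContact P Q →
    ∃ i, right (P i) ≠ 0 ∧ ∃ l m n : R, Q = rescale l m n (P i)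
  reduced : ∀ i, right (P i) ≠ 0 → ∀ D, IsContactDir P i D →
    ∃ l m n : R, D = rescale l m n (P i)

variable {P : ι → α ⊕ β ⊕ γ → R} {Q D : α ⊕ β ⊕ γ → R} {i : ι}

theorem IsContact.rescale (h : IsContact P Q) (l m n : R) : IsContact P (rescale l m n Q) := by
  rintro _ ⟨E, rfl⟩
  rw [segreDeriv_rescale_left]
  exact h ⟨_, rfl⟩

theorem IsContactDir.sub_rescale (h : IsContactDir P i D) (l m n : R) :
    IsContactDir P i (D - SegreContact.rescale l m n (P i)) := by
  rintro _ ⟨E, rfl⟩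
  rw [segreHess_sub_rescale]
  exact sub_mem (h ⟨_, rfl⟩) (range_segreDeriv_le P i ⟨_, rfl⟩)

theorem IsContactDir.smul (h : IsContactDir P i D) (c : R) : IsContactDir P i (c • D) := by
  rintro _ ⟨E, rfl⟩
  rw [segreHess_smul]
  exact Submodule.smul_mem _ _ (h ⟨_, rfl⟩)

end TangentMap

section NormalForm

variable {ι α β γ K : Type*} [Field K]

/-- Tangent vectors normalized modulo the trivial relations: the pivot entries `p i`, `q i` vanish,
and where the third factor of `P i` vanishes only the third component is used. -/
structure IsNormalized (P : ι → α ⊕ β ⊕ γ → K) (p : ι → α) (q : ι → β)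
    (D : ι → α ⊕ β ⊕ γ → K) : Prop where
  left_pivot : ∀ i, left (D i) (p i) = 0
  mid_pivot : ∀ i, mid (D i) (q i) = 0
  left_eq_zero : ∀ i, right (P i) = 0 → left (D i) = 0
  mid_eq_zero : ∀ i, right (P i) = 0 → mid (D i) = 0

variable {P : ι → α ⊕ β ⊕ γ → K} {p : ι → α} {q : ι → β}

theorem IsNormalized.smul {D : ι → α ⊕ β ⊕ γ → K} (h : IsNormalized P p q D) (c : K) :
    IsNormalized P p q (c • D) where
  left_pivot i := by simpa using .inr (h.left_pivot i)
  mid_pivot i := by simpa using .inr (h.mid_pivot i)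
  left_eq_zero i hi := funext fun x => by simpa using .inr (congrFun (h.left_eq_zero i hi) x)
  mid_eq_zero i hi := funext fun y => by simpa using .inr (congrFun (h.mid_eq_zero i hi) y)

theorem segreDeriv_eq_of_right_eq_zero {Q D E : α ⊕ β ⊕ γ → K} (hQ : right Q = 0)
    (h : right D = right E) : segreDeriv Q D = segreDeriv Q E := by
  ext x
  have hQ := congrFun hQ x.2.2
  have h := congrFun h x.2.2
  simp only [Pi.zero_apply] at hQ h
  simp [segreDeriv_apply, hQ, h]

variable [Fintype ι]

theorem exists_isNormalized (hp : ∀ i, left (P i) (p i) ≠ 0) (hq : ∀ i, mid (P i) (q i) ≠ 0)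
    (D : ι → α ⊕ β ⊕ γ → K) :
    ∃ D', IsNormalized P p q D' ∧ tangentMap P D' = tangentMap P D ∧
      ∀ i, (right (P i) = 0 → right (D' i) = right (D i)) ∧
        (right (P i) ≠ 0 → ∃ l m n : K, l + m + n = 0 ∧ D i - D' i = rescale l m n (P i)) := by
  classical
  let l i := left (D i) (p i) / left (P i) (p i)
  let m i := mid (D i) (q i) / mid (P i) (q i)
  let D' : ι → α ⊕ β ⊕ γ → K := fun i =>
    if right (P i) = 0 then Sum.elim (0 : α → K) (Sum.elim (0 : β → K) (right (D i)))
    else D i - rescale (l i) (m i) (-(l i + m i)) (P i)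
  have hD₀ : ∀ i, right (P i) = 0 →
      D' i = Sum.elim (0 : α → K) (Sum.elim (0 : β → K) (right (D i))) := fun i hi => if_pos hi
  have hD₁ : ∀ i, right (P i) ≠ 0 → D' i = D i - rescale (l i) (m i) (-(l i + m i)) (P i) :=
    fun i hi => if_neg hi
  refine ⟨D', ⟨fun i => ?_, fun i => ?_, fun i hi => by rw [hD₀ i hi]; rfl,
    fun i hi => by rw [hD₀ i hi]; rfl⟩, ?_, fun i => ⟨fun hi => by rw [hD₀ i hi]; rfl,
    fun hi => ⟨l i, m i, -(l i + m i), by ring, by rw [hD₁ i hi, sub_sub_cancel]⟩⟩⟩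
  · by_cases hi : right (P i) = 0
    · simp [hD₀ i hi]
    · simp [hD₁ i hi, l, div_mul_cancel₀ _ (hp i)]
  · by_cases hi : right (P i) = 0
    · simp [hD₀ i hi]
    · simp [hD₁ i hi, m, div_mul_cancel₀ _ (hq i)]
  · simp only [tangentMap_apply]
    refine Finset.sum_congr rfl fun i _ => ?_
    by_cases hi : right (P i) = 0
    · exact segreDeriv_eq_of_right_eq_zero hi (by rw [hD₀ i hi]; rfl)
    · rw [hD₁ i hi, map_sub, segreDeriv_rescale, add_neg_cancel, zero_smul, sub_zero]

theorem IsIndep.eq_zero_of_isNormalized (h : IsIndep P) (hp : ∀ i, left (P i) (p i) ≠ 0)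
    (hq : ∀ i, mid (P i) (q i) ≠ 0) {D : ι → α ⊕ β ⊕ γ → K} (hD : IsNormalized P p q D)
    (h0 : tangentMap P D = 0) : D = 0 := by
  funext i
  by_cases hi : right (P i) = 0
  · have h₁ := hD.left_eq_zero i hi
    have h₂ := hD.mid_eq_zero i hi
    have h₃ := (h D h0 i).1 hi
    funext s
    rcases s with x | y | z
    exacts [congrFun h₁ x, congrFun h₂ y, congrFun h₃ z]
  · obtain ⟨l, m, n, hlmn, hDi⟩ := (h D h0 i).2 hi
    have hl : l = 0 := by simpa [hDi, hp i] using hD.left_pivot i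
    have hm : m = 0 := by simpa [hDi, hq i] using hD.mid_pivot i
    have hn : n = 0 := by simpa [hl, hm] using hlmn
    funext s
    rcases s with x | y | z <;> simp [hDi, hl, hm, hn]

theorem isIndep_of_isNormalized (hp : ∀ i, left (P i) (p i) ≠ 0) (hq : ∀ i, mid (P i) (q i) ≠ 0)
    (h : ∀ D, IsNormalized P p q D → tangentMap P D = 0 → D = 0) : IsIndep P := by
  intro D hD i
  obtain ⟨D', hN, hT, hrel⟩ := exists_isNormalized hp hq D
  obtain rfl := h D' hN (hT.trans hD)
  refine ⟨fun hi => ((hrel i).1 hi).symm, fun hi => ?_⟩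
  simpa using (hrel i).2 hi

end NormalForm

section ValuationRing

open IsLocalRing

variable {K : Type*} [Field K] {O : ValuationSubring K}

theorem exists_primitive_smul (O : ValuationSubring K) {σ : Type*} [Finite σ] {x : σ → K}
    (hx : x ≠ 0) :
    ∃ c : K, c ≠ 0 ∧ ∃ X : σ → O, algebraMap O K ∘ X = c • x ∧ ∃ s, X s = 1 := by
  obtain ⟨t, ht⟩ := Function.ne_iff.mp hx
  have : Nonempty σ := ⟨t⟩
  obtain ⟨s, hs⟩ := Finite.exists_max fun s => O.valuation (x s)
  have hs0 : x s ≠ 0 := fun h => ht (by simpa [h] using hs t)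
  have hmem : ∀ r, (x s)⁻¹ * x r ∈ O := fun r => by
    rw [← O.valuation_le_one_iff, map_mul, map_inv₀,
      inv_mul_le_iff₀ (zero_lt_iff.mpr (by simpa using hs0)), mul_one]
    exact hs r
  exact ⟨(x s)⁻¹, inv_ne_zero hs0, fun r => ⟨_, hmem r⟩, rfl, s, Subtype.ext (inv_mul_cancel₀ hs0)⟩

theorem residue_comp_ne_zero {σ : Type*} {X : σ → O} (h : ∃ s, X s = 1) : residue O ∘ X ≠ 0 := by
  obtain ⟨s, hs⟩ := h
  exact fun h0 => one_ne_zero (α := ResidueField O) (by simpa [hs] using congrFun h0 s)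

theorem algebraMap_comp_injective {σ : Type*} :
    Function.Injective fun X : σ → O => algebraMap O K ∘ X :=
  (FaithfulSMul.algebraMap_injective O K).comp_left

theorem algebraMap_comp_eq_zero_iff {σ : Type*} {X : σ → O} : algebraMap O K ∘ X = 0 ↔ X = 0 := by
  rw [← algebraMap_comp_injective.eq_iff (b := 0)]
  simp only [Function.comp_def, Pi.zero_apply, map_zero]
  rfl

variable {ι α β γ : Type*} {P : ι → α ⊕ β ⊕ γ → O} {p : ι → α} {q : ι → β}

/-- The pivots `p i`, `q i` of the first two factors do not reduce to zero, and the third factors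
reduce to zero only where they vanish. -/
structure Nondegenerate (P : ι → α ⊕ β ⊕ γ → O) (p : ι → α) (q : ι → β) : Prop where
  left : ∀ i, residue O (left (P i) (p i)) ≠ 0
  mid : ∀ i, residue O (mid (P i) (q i)) ≠ 0
  right : ∀ i, right (P i) = 0 ∨ residue O ∘ right (P i) ≠ 0

theorem algebraMap_ne_zero_of_residue_ne_zero {x : O} (h : residue O x ≠ 0) :
    algebraMap O K x ≠ 0 := by
  rw [Ne, FaithfulSMul.algebraMap_eq_zero_iff]
  rintro rfl
  exact h (map_zero _)

theorem Nondegenerate.right_residue_eq_zero_iff (hn : Nondegenerate P p q) (i : ι) :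
    SegreContact.right (mapConfig (residue O) P i) = 0 ↔
      SegreContact.right (mapConfig (algebraMap O K) P i) = 0 := by
  have hcoe : SegreContact.right (mapConfig (algebraMap O K) P i) = 0 ↔
      SegreContact.right (P i) = 0 := algebraMap_comp_eq_zero_iff
  rw [hcoe]
  refine ⟨fun h => (hn.right i).resolve_right fun h' => h' h, fun h => funext fun z => ?_⟩
  have := congrFun h z
  simp_all

theorem exists_primitive_smul_of_isNormalized [Finite ι] [Finite α] [Finite β] [Finite γ]
    {D : ι → α ⊕ β ⊕ γ → K}
    (hD : IsNormalized (mapConfig (algebraMap O K) P) p q D) (hD0 : D ≠ 0) :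
    ∃ c : K, c ≠ 0 ∧ ∃ X : ι → α ⊕ β ⊕ γ → O, mapConfig (algebraMap O K) X = c • D ∧
      IsNormalized (mapConfig (algebraMap O K) P) p q (mapConfig (algebraMap O K) X) ∧
      mapConfig (residue O) X ≠ 0 := by
  have hD0' : Function.uncurry D ≠ 0 := fun h =>
    hD0 (funext fun i => funext fun s => congrFun h (i, s))
  obtain ⟨c, hc, X, hX, ⟨i, s⟩, h1⟩ := exists_primitive_smul O hD0'
  have hXD : mapConfig (algebraMap O K) (Function.curry X) = c • D :=
    funext fun j => funext fun r => congrFun hX (j, r)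
  refine ⟨c, hc, Function.curry X, hXD, hXD ▸ hD.smul c, fun h => ?_⟩
  exact residue_comp_ne_zero ⟨s, h1⟩ (congrFun h i)

variable [Fintype ι]

theorem residue_comp_eq_zero_of_isNormalized (hn : Nondegenerate P p q)
    (hP : IsIndep (mapConfig (residue O) P)) {D : ι → α ⊕ β ⊕ γ → O}
    (hD : IsNormalized (mapConfig (algebraMap O K) P) p q (mapConfig (algebraMap O K) D))
    (h0 : residue O ∘ tangentMap P D = 0) : mapConfig (residue O) D = 0 := by
  have hD' : IsNormalized (mapConfig (residue O) P) p q (mapConfig (residue O) D) := by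
    have key : ∀ {x : O}, algebraMap O K x = 0 → residue O x = 0 := fun {x} hx => by
      rw [(FaithfulSMul.algebraMap_eq_zero_iff O K).mp hx, map_zero]
    refine ⟨fun i => key (hD.left_pivot i), fun i => key (hD.mid_pivot i), fun i hi => ?_,
      fun i hi => ?_⟩
    · exact funext fun x =>
        key (congrFun (hD.left_eq_zero i ((hn.right_residue_eq_zero_iff i).mp hi)) x)
    · exact funext fun y =>
        key (congrFun (hD.mid_eq_zero i ((hn.right_residue_eq_zero_iff i).mp hi)) y)
  exact hP.eq_zero_of_isNormalized hn.left hn.mid hD' (by rwa [tangentMap_mapConfig])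

variable [Finite α] [Finite β] [Finite γ]

theorem IsIndep.of_residue (hn : Nondegenerate P p q) (hP : IsIndep (mapConfig (residue O) P)) :
    IsIndep (mapConfig (algebraMap O K) P) := by
  refine isIndep_of_isNormalized (fun i => algebraMap_ne_zero_of_residue_ne_zero (hn.left i))
    (fun i => algebraMap_ne_zero_of_residue_ne_zero (hn.mid i)) fun D hD h0 => ?_
  by_contra hD0
  obtain ⟨c, -, X, hX, hXN, hX0⟩ := exists_primitive_smul_of_isNormalized hD hD0
  refine hX0 (residue_comp_eq_zero_of_isNormalized hn hP hXN ?_)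
  have : tangentMap P X = 0 := by
    rw [← algebraMap_comp_eq_zero_iff, ← tangentMap_mapConfig, hX, map_smul, h0, smul_zero]
  rw [this]
  exact funext fun _ => map_zero _

/-- Otherwise a primitive multiple of `D` would lie in the kernel of the reduction of
`tangentMap`. -/
theorem exists_mapConfig_eq_of_isNormalized (hn : Nondegenerate P p q)
    (hP : IsIndep (mapConfig (residue O) P)) {D : ι → α ⊕ β ⊕ γ → K}
    (hD : IsNormalized (mapConfig (algebraMap O K) P) p q D) {T : α × β × γ → O}
    (hT : tangentMap (mapConfig (algebraMap O K) P) D = algebraMap O K ∘ T) :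
    ∃ X : ι → α ⊕ β ⊕ γ → O, mapConfig (algebraMap O K) X = D := by
  rcases eq_or_ne D 0 with rfl | hD0
  · exact ⟨0, funext fun _ => funext fun _ => map_zero _⟩
  obtain ⟨c, hc, X, hX, hXN, hX0⟩ := exists_primitive_smul_of_isNormalized hD hD0
  by_cases hcO : c⁻¹ ∈ O
  · refine ⟨(⟨c⁻¹, hcO⟩ : O) • X, ?_⟩
    rw [← inv_smul_smul₀ hc D, ← hX]
    ext i s
    simp [ValuationSubring.algebraMap_apply]
  · have hc1 : O.valuation c < 1 := by
      rw [← O.valuation_le_one_iff, not_le, map_inv₀] at hcO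
      exact (one_lt_inv₀ (zero_lt_iff.mpr (by simpa using hc))).mp hcO
    let c' : O := ⟨c, (O.valuation_le_one_iff c).mp hc1.le⟩
    have hc' : residue O c' = 0 :=
      (residue_eq_zero_iff _).mpr ((O.valuation_lt_one_iff c').mpr hc1)
    have hXT : tangentMap P X = c' • T := algebraMap_comp_injective <| by
      beta_reduce
      rw [← tangentMap_mapConfig, hX, map_smul, hT]
      rfl
    refine absurd (residue_comp_eq_zero_of_isNormalized hn hP hXN ?_) hX0
    rw [hXT]
    ext s
    simp [hc']

theorem residue_comp_mem_range_tangentMap (hn : Nondegenerate P p q)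
    (hP : IsIndep (mapConfig (residue O) P)) {T : α × β × γ → O}
    (hT : algebraMap O K ∘ T ∈ LinearMap.range (tangentMap (mapConfig (algebraMap O K) P))) :
    residue O ∘ T ∈ LinearMap.range (tangentMap (mapConfig (residue O) P)) := by
  obtain ⟨D, hD⟩ := hT
  obtain ⟨D', hN, hD', -⟩ := exists_isNormalized (P := mapConfig (algebraMap O K) P)
    (fun i => algebraMap_ne_zero_of_residue_ne_zero (hn.left i))
    (fun i => algebraMap_ne_zero_of_residue_ne_zero (hn.mid i)) D
  obtain ⟨X, rfl⟩ := exists_mapConfig_eq_of_isNormalized hn hP hN (hD'.trans hD)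
  have hX : tangentMap P X = T := algebraMap_comp_injective <| by
    beta_reduce
    rw [← tangentMap_mapConfig, hD', hD]
  exact ⟨mapConfig (residue O) X, by rw [tangentMap_mapConfig, hX]⟩

end ValuationRing

section Specialization

open IsLocalRing

theorem Good.eq_zero_of_isContactDir {ι α β γ K : Type*} [Fintype ι] [Field K]
    {P : ι → α ⊕ β ⊕ γ → K} (hP : Good P) {i : ι} {a : α} {b : β} {c : γ}
    (ha : left (P i) a ≠ 0) (hb : mid (P i) b ≠ 0) (hc : right (P i) c ≠ 0)
    {D : α ⊕ β ⊕ γ → K} (hDa : left D a = 0) (hDb : mid D b = 0) (hDc : right D c = 0)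
    (h : IsContactDir P i D) : D = 0 := by
  obtain ⟨l, m, n, rfl⟩ := hP.reduced i (fun h0 => hc (congrFun h0 c)) D h
  have hl : l = 0 := by simpa [ha] using hDa
  have hm : m = 0 := by simpa [hb] using hDb
  have hn : n = 0 := by simpa [hc] using hDc
  funext s
  rcases s with x | y | z <;> simp [hl, hm, hn]

variable {K : Type*} [Field K] {O : ValuationSubring K}
variable {ι α β γ : Type*} {P : ι → α ⊕ β ⊕ γ → O} {p : ι → α} {q : ι → β} {i : ι} {o : γ}

theorem exists_residue_right_ne_zero (hn : Nondegenerate P p q)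
    (hi : right (mapConfig (algebraMap O K) P i) ≠ 0) : ∃ o, residue O (right (P i) o) ≠ 0 :=
  Function.ne_iff.mp fun h => hi ((hn.right_residue_eq_zero_iff i).mp h)

theorem exists_smul_eq_at_pivot {σ : Type*} {x y : σ → O} {l : ResidueField O} {o : σ}
    (hx : residue O ∘ x ≠ 0) (h : residue O ∘ x = l • (residue O ∘ y)) (ho : residue O (y o) ≠ 0) :
    ∃ c : O, c ≠ 0 ∧ residue O ∘ (c • x) = residue O ∘ y ∧ c * x o = y o := by
  have hl : l ≠ 0 := fun hl => hx (by rw [h, hl, zero_smul])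
  have hxs : ∀ s, residue O (x s) = l * residue O (y s) := congrFun h
  obtain ⟨e, he⟩ := (residue_ne_zero_iff_isUnit _).mp ((hxs o).trans_ne (mul_ne_zero hl ho))
  have hpivot : y o * ↑e⁻¹ * x o = y o := by rw [← he, mul_assoc, Units.inv_mul, mul_one]
  have hres : residue O (y o * ↑e⁻¹) * l = 1 := mul_right_cancel₀ ho <| by
    rw [mul_assoc, ← hxs, ← map_mul, hpivot, one_mul]
  refine ⟨y o * ↑e⁻¹, fun h0 => ho ?_, funext fun s => ?_, hpivot⟩
  · rw [← hpivot, h0, zero_mul, map_zero]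
  · rw [Function.comp_apply, Pi.smul_apply, smul_eq_mul, map_mul, hxs, ← mul_assoc, hres, one_mul]
    rfl

theorem exists_primitive_rescale [Finite α] [Finite β] [Finite γ] {Q : α ⊕ β ⊕ γ → K}
    (hl : left Q ≠ 0) (hm : mid Q ≠ 0) (hr : right Q ≠ 0) :
    ∃ a b c : K, a ≠ 0 ∧ b ≠ 0 ∧ c ≠ 0 ∧ ∃ X : α ⊕ β ⊕ γ → O,
      algebraMap O K ∘ X = rescale a b c Q ∧
      left (residue O ∘ X) ≠ 0 ∧ mid (residue O ∘ X) ≠ 0 ∧ right (residue O ∘ X) ≠ 0 := by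
  obtain ⟨a, ha, x, hx, hx0⟩ := exists_primitive_smul O hl
  obtain ⟨b, hb, y, hy, hy0⟩ := exists_primitive_smul O hm
  obtain ⟨c, hc, z, hz, hz0⟩ := exists_primitive_smul O hr
  refine ⟨a, b, c, ha, hb, hc, Sum.elim x (Sum.elim y z), ?_, residue_comp_ne_zero hx0,
    residue_comp_ne_zero hy0, residue_comp_ne_zero hz0⟩
  simp only [Sum.comp_elim, hx, hy, hz, rescale]

theorem exists_rescale_eq_at_pivots (hn : Nondegenerate P p q)
    (ho : residue O (right (P i) o) ≠ 0) {Q : α ⊕ β ⊕ γ → O}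
    (hl : left (residue O ∘ Q) ≠ 0) (hm : mid (residue O ∘ Q) ≠ 0) (hr : right (residue O ∘ Q) ≠ 0)
    {l m n : ResidueField O} (h : residue O ∘ Q = rescale l m n (residue O ∘ P i)) :
    ∃ a b c : O, a ≠ 0 ∧ b ≠ 0 ∧ c ≠ 0 ∧
      residue O ∘ rescale a b c Q = residue O ∘ P i ∧
      left (rescale a b c Q) (p i) = left (P i) (p i) ∧
      mid (rescale a b c Q) (q i) = mid (P i) (q i) ∧
      right (rescale a b c Q) o = right (P i) o := by
  obtain ⟨a, ha, hax, hap⟩ := exists_smul_eq_at_pivot (y := left (P i)) hl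
    (funext fun x => congrFun h (.inl x)) (hn.left i)
  obtain ⟨b, hb, hby, hbq⟩ := exists_smul_eq_at_pivot (y := mid (P i)) hm
    (funext fun y => congrFun h (.inr (.inl y))) (hn.mid i)
  obtain ⟨c, hc, hcz, hco⟩ := exists_smul_eq_at_pivot (y := right (P i)) hr
    (funext fun z => congrFun h (.inr (.inr z))) ho
  refine ⟨a, b, c, ha, hb, hc, funext fun s => ?_, hap, hbq, hco⟩
  rcases s with x | y | z
  exacts [congrFun hax x, congrFun hby y, congrFun hcz z]

variable [Fintype ι] [Finite α] [Finite β] [Finite γ]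

theorem IsContact.residue (hn : Nondegenerate P p q) (hP : IsIndep (mapConfig (residue O) P))
    {Q : α ⊕ β ⊕ γ → O} (h : IsContact (mapConfig (algebraMap O K) P) (algebraMap O K ∘ Q)) :
    IsContact (mapConfig (residue O) P) (IsLocalRing.residue O ∘ Q) := by
  rintro _ ⟨E, rfl⟩
  obtain ⟨E, rfl⟩ := residue_surjective.comp_left E
  rw [segreDeriv_comp]
  refine residue_comp_mem_range_tangentMap hn hP (h ⟨algebraMap O K ∘ E, ?_⟩)
  rw [segreDeriv_comp]

theorem IsContactDir.residue (hn : Nondegenerate P p q) (hP : IsIndep (mapConfig (residue O) P))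
    {D : α ⊕ β ⊕ γ → O} (h : IsContactDir (mapConfig (algebraMap O K) P) i (algebraMap O K ∘ D)) :
    IsContactDir (mapConfig (residue O) P) i (IsLocalRing.residue O ∘ D) := by
  rintro _ ⟨E, rfl⟩
  obtain ⟨E, rfl⟩ := residue_surjective.comp_left E
  rw [segreHess_comp]
  refine residue_comp_mem_range_tangentMap hn hP (h ⟨algebraMap O K ∘ E, ?_⟩)
  rw [segreHess_comp]

theorem reduced_of_residue (hn : Nondegenerate P p q) (hP : Good (mapConfig (residue O) P))
    (hi : right (mapConfig (algebraMap O K) P i) ≠ 0) {D : α ⊕ β ⊕ γ → K}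
    (h : IsContactDir (mapConfig (algebraMap O K) P) i D) :
    ∃ l m n : K, D = rescale l m n (mapConfig (algebraMap O K) P i) := by
  obtain ⟨o, ho⟩ := exists_residue_right_ne_zero hn hi
  let l := left D (p i) / algebraMap O K (left (P i) (p i))
  let m := mid D (q i) / algebraMap O K (mid (P i) (q i))
  let n := right D o / algebraMap O K (right (P i) o)
  refine ⟨l, m, n, sub_eq_zero.mp ?_⟩
  set D' := D - rescale l m n (mapConfig (algebraMap O K) P i)
  have hl : left D' (p i) = 0 :=
    sub_eq_zero.mpr (div_mul_cancel₀ _ (algebraMap_ne_zero_of_residue_ne_zero (hn.left i))).symm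
  have hm : mid D' (q i) = 0 :=
    sub_eq_zero.mpr (div_mul_cancel₀ _ (algebraMap_ne_zero_of_residue_ne_zero (hn.mid i))).symm
  have hr : right D' o = 0 :=
    sub_eq_zero.mpr (div_mul_cancel₀ _ (algebraMap_ne_zero_of_residue_ne_zero ho)).symm
  by_contra hne
  obtain ⟨c, -, X, hX, hX1⟩ := exists_primitive_smul O hne
  have hX0 : ∀ s, D' s = 0 → IsLocalRing.residue O (X s) = 0 := fun s hs => by
    have : algebraMap O K (X s) = 0 := by simpa [hs] using congrFun hX s
    rw [(FaithfulSMul.algebraMap_eq_zero_iff O K).mp this, map_zero]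
  refine residue_comp_ne_zero hX1 (hP.eq_zero_of_isContactDir (hn.left i) (hn.mid i) ho
    (hX0 _ hl) (hX0 _ hm) (hX0 _ hr) (IsContactDir.residue hn hP.indep ?_))
  rw [hX]
  exact (h.sub_rescale l m n).smul c

/-- Dividing a deformation `P i + ε X`, with `X` primitive and `ε` in the maximal ideal, by `ε`
shows that the reduction of `X` is a contact direction. -/
theorem isContactDir_residue_of_isContact (hn : Nondegenerate P p q)
    (hP : IsIndep (mapConfig (residue O) P)) {X : α ⊕ β ⊕ γ → O} {ε : O} (hε : ε ≠ 0)
    (hε' : residue O ε = 0)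
    (h : IsContact (mapConfig (algebraMap O K) P) (algebraMap O K ∘ (P i + ε • X))) :
    IsContactDir (mapConfig (residue O) P) i (residue O ∘ X) := by
  rintro _ ⟨E, rfl⟩
  obtain ⟨E, rfl⟩ := residue_surjective.comp_left E
  have hres : residue O ∘ (segreHess (P i) X E + ε • segreDeriv X E) =
      residue O ∘ segreHess (P i) X E := by
    ext x
    simp [hε']
  rw [segreHess_comp, ← hres]
  refine residue_comp_mem_range_tangentMap hn hP ?_
  have hεK : algebraMap O K ε ≠ 0 := by simpa using hε
  have hsmul : algebraMap O K ε • (algebraMap O K ∘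
      (segreHess (P i) X E + ε • segreDeriv X E)) =
      segreDeriv (algebraMap O K ∘ (P i + ε • X)) (algebraMap O K ∘ E) -
        segreDeriv (mapConfig (algebraMap O K) P i) (algebraMap O K ∘ E) := by
    rw [segreDeriv_comp, segreDeriv_comp]
    ext x
    simpa using (congrArg (algebraMap O K) (congrFun (segreDeriv_add_smul (P i) X E ε) x)).symm
  rw [← Submodule.smul_mem_iff _ hεK, hsmul]
  exact sub_mem (h ⟨_, rfl⟩) (range_segreDeriv_le _ i ⟨_, rfl⟩)

theorem eq_of_isContact (hn : Nondegenerate P p q) (hP : Good (mapConfig (residue O) P))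
    (ho : residue O (right (P i) o) ≠ 0) {Q : α ⊕ β ⊕ γ → O}
    (hQ : residue O ∘ Q = residue O ∘ P i) (hl : left Q (p i) = left (P i) (p i))
    (hm : mid Q (q i) = mid (P i) (q i)) (hr : right Q o = right (P i) o)
    (h : IsContact (mapConfig (algebraMap O K) P) (algebraMap O K ∘ Q)) : Q = P i := by
  by_contra hne
  obtain ⟨c, -, X, hX, s, hs⟩ := exists_primitive_smul (x := algebraMap O K ∘ (Q - P i)) O
    fun h0 => hne (sub_eq_zero.mp (algebraMap_comp_eq_zero_iff.mp h0))
  have hXr : ∀ r, algebraMap O K (X r) = c * algebraMap O K (Q r - P i r) := congrFun hX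
  have hcs : c * algebraMap O K (Q s - P i s) = 1 := by rw [← hXr, hs, map_one]
  set ε : O := Q s - P i s
  have hε : ε ≠ 0 := fun h0 => by simp [h0] at hcs
  have hε' : residue O ε = 0 := by
    rw [map_sub, sub_eq_zero]
    exact congrFun hQ s
  have hQX : Q = P i + ε • X := algebraMap_comp_injective <| funext fun r => by
    simp only [Function.comp_apply, Pi.add_apply, Pi.smul_apply, smul_eq_mul, map_add, map_mul,
      hXr, map_sub (algebraMap O K) (Q r)]
    linear_combination (algebraMap O K (P i r) - algebraMap O K (Q r)) * hcs
  have hX0 : ∀ r, Q r = P i r → residue O (X r) = 0 := fun r hr => by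
    have : algebraMap O K (X r) = 0 := by rw [hXr, hr, sub_self, map_zero, mul_zero]
    rw [(FaithfulSMul.algebraMap_eq_zero_iff O K).mp this, map_zero]
  exact residue_comp_ne_zero ⟨s, hs⟩ (hP.eq_zero_of_isContactDir (hn.left i) (hn.mid i) ho
    (hX0 _ hl) (hX0 _ hm) (hX0 _ hr)
    (isContactDir_residue_of_isContact hn hP.indep hε hε' (hQX ▸ h)))

theorem contact_of_residue (hn : Nondegenerate P p q) (hP : Good (mapConfig (residue O) P))
    {Q : α ⊕ β ⊕ γ → K} (hl : left Q ≠ 0) (hm : mid Q ≠ 0) (hr : right Q ≠ 0)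
    (h : IsContact (mapConfig (algebraMap O K) P) Q) :
    ∃ i, right (mapConfig (algebraMap O K) P i) ≠ 0 ∧
      ∃ l m n : K, Q = rescale l m n (mapConfig (algebraMap O K) P i) := by
  obtain ⟨a, b, c, ha, hb, hc, X, hX, hXl, hXm, hXr⟩ := exists_primitive_rescale (O := O) hl hm hr
  obtain ⟨i, hi, l, m, n, hXi⟩ := hP.contact _ hXl hXm hXr
    (IsContact.residue hn hP.indep (hX ▸ h.rescale a b c))
  obtain ⟨o, ho⟩ := Function.ne_iff.mp hi
  obtain ⟨a', b', c', ha', hb', hc', hres, hp, hq, ho'⟩ :=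
    exists_rescale_eq_at_pivots hn ho hXl hXm hXr hXi
  have hcomp : algebraMap O K ∘ rescale a' b' c' X =
      rescale (algebraMap O K a' * a) (algebraMap O K b' * b) (algebraMap O K c' * c) Q := by
    rw [← rescale_rescale, ← hX, rescale_comp]
  have hXP : rescale a' b' c' X = P i :=
    eq_of_isContact hn hP ho hres hp hq ho' (hcomp ▸ h.rescale _ _ _)
  refine ⟨i, fun h0 => hi ((hn.right_residue_eq_zero_iff i).mpr h0), (algebraMap O K a' * a)⁻¹,
    (algebraMap O K b' * b)⁻¹, (algebraMap O K c' * c)⁻¹, ?_⟩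
  refine eq_rescale_inv_of_rescale_eq (mul_ne_zero ?_ ha) (mul_ne_zero ?_ hb) (mul_ne_zero ?_ hc)
    (hcomp.symm.trans (congrArg (algebraMap O K ∘ ·) hXP))
  all_goals rwa [Ne, FaithfulSMul.algebraMap_eq_zero_iff]

theorem Good.of_residue (hn : Nondegenerate P p q) (hP : Good (mapConfig (residue O) P)) :
    Good (mapConfig (algebraMap O K) P) where
  indep := .of_residue hn hP.indep
  contact _ := contact_of_residue hn hP
  reduced _ hi _ := reduced_of_residue hn hP hi

end Specialization

section RingSpecialization

open IsLocalRing

universe r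

variable {R S : Type*} {K : Type r} [CommRing R] [Field K] [CommRing S] [IsDomain S]

theorem exists_valuationSubring_specialization (φ : R →+* K) (ψ : R →+* S)
    (h : RingHom.ker φ ≤ RingHom.ker ψ) :
    ∃ (O : ValuationSubring K) (χ : R →+* O), (∀ x, algebraMap O K (χ x) = φ x) ∧
      ∀ x, residue O (χ x) = 0 ↔ ψ x = 0 := by
  have := RingHom.ker_isPrime ψ
  set 𝔮 := RingHom.ker ψ
  have hunit : ∀ y : 𝔮.primeCompl, IsUnit (φ y) := fun y =>
    isUnit_iff_ne_zero.mpr fun h0 => y.2 (h h0)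
  let f : Localization.AtPrime 𝔮 →+* K := IsLocalization.lift (M := 𝔮.primeCompl) hunit
  obtain ⟨O, hO, hloc⟩ := IsLocalRing.exists_factor_valuationRing f
  let g : Localization.AtPrime 𝔮 →+* O := f.codRestrict O.toSubring hO
  have hg : IsLocalHom g := hloc
  refine ⟨O, g.comp (algebraMap R _), fun x => IsLocalization.lift_eq hunit x, fun x => ?_⟩
  rw [residue_eq_zero_iff, mem_maximalIdeal, RingHom.comp_apply, mem_nonunits_iff,
    isUnit_map_iff, IsLocalization.AtPrime.isUnit_to_map_iff (Localization.AtPrime 𝔮) 𝔮]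
  simp [Ideal.primeCompl, 𝔮]

variable {ι α β γ : Type*} [Fintype ι] [Finite α] [Finite β] [Finite γ]

theorem Good.of_specialization (φ : R →+* K) (ψ : R →+* S) (hker : RingHom.ker φ ≤ RingHom.ker ψ)
    {P : ι → α ⊕ β ⊕ γ → R} (hl : ∀ i, ∃ x, ψ (left (P i) x) ≠ 0)
    (hm : ∀ i, ∃ y, ψ (mid (P i) y) ≠ 0)
    (hr : ∀ i, (∀ z, φ (right (P i) z) = 0) ∨ ∃ z, ψ (right (P i) z) ≠ 0)
    (hgood : ∀ (κ : Type r) [Field κ] (χ : R →+* κ), RingHom.ker χ = RingHom.ker ψ →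
      Good (mapConfig χ P)) :
    Good (mapConfig φ P) := by
  obtain ⟨O, χ, hχφ, hχψ⟩ := exists_valuationSubring_specialization φ ψ hker
  choose p hp using hl
  choose q hq using hm
  have hn : Nondegenerate (mapConfig χ P) p q :=
    { left := fun i h => hp i ((hχψ _).mp h)
      mid := fun i h => hq i ((hχψ _).mp h)
      right := fun i => (hr i).imp
        (fun h => algebraMap_comp_eq_zero_iff.mp (funext fun z => (hχφ _).trans (h z)))
        fun ⟨z, hz⟩ h => hz ((hχψ _).mp (congrFun h z)) }
  have hφ : mapConfig φ P = mapConfig (algebraMap O K) (mapConfig χ P) :=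
    funext fun i => funext fun s => (hχφ (P i s)).symm
  rw [hφ]
  exact .of_residue hn (hgood _ ((residue O).comp χ) (Ideal.ext hχψ))

end RingSpecialization

section Blocks

variable {ι α β γ δ J R : Type*}

/-- The point obtained by pulling back the third factor along `f`. -/
abbrev comapRight (f : δ → γ) (Q : α ⊕ β ⊕ γ → R) : α ⊕ β ⊕ δ → R :=
  Q ∘ Sum.map id (Sum.map id f)

theorem comapRight_surjective [Nonempty R] {f : δ → γ} (hf : f.Injective) :
    (comapRight (α := α) (β := β) (R := R) f).Surjective :=
  (Function.injective_id.sumMap (Function.injective_id.sumMap hf)).surjective_comp_right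

/-- The configuration with the third factors restricted to the coordinates in the `j`-th block. -/
abbrev block (π : γ → J) (j : J) (P : ι → α ⊕ β ⊕ γ → R) : ι → α ⊕ β ⊕ {z // π z = j} → R :=
  fun i => comapRight Subtype.val (P i)

variable {K : Type*} [Field K] {P : ι → α ⊕ β ⊕ γ → K} {Q D : α ⊕ β ⊕ γ → K} {i : ι}

/-- The third factor of each point `P i` is nonzero and supported on the block `g i`. -/
structure IsBlockSupported (π : γ → J) (g : ι → J) (P : ι → α ⊕ β ⊕ γ → K) : Prop where
  right_ne_zero : ∀ i, right (P i) ≠ 0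
  eq_of_ne_zero : ∀ i z, right (P i) z ≠ 0 → π z = g i

variable {π : γ → J} {g : ι → J}

theorem IsBlockSupported.right_block_eq_zero (h : IsBlockSupported π g P) {j : J} (hj : j ≠ g i) :
    right (block π j P i) = 0 := by
  funext z
  by_contra hz
  exact hj (z.2.symm.trans (h.eq_of_ne_zero i z hz))

theorem IsBlockSupported.right_block_ne_zero_iff (h : IsBlockSupported π g P) {j : J} :
    right (block π j P i) ≠ 0 ↔ j = g i := by
  refine ⟨fun h0 => not_not.mp fun hj => h0 (h.right_block_eq_zero hj), ?_⟩
  rintro rfl h0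
  obtain ⟨z, hz⟩ := Function.ne_iff.mp (h.right_ne_zero i)
  exact hz (congrFun h0 ⟨z, h.eq_of_ne_zero i z hz⟩)

theorem IsBlockSupported.eq_rescale (h : IsBlockSupported π g P) {l m n : K}
    (hQ : comapRight (Subtype.val : {z // π z = g i} → γ) Q = rescale l m n (block π (g i) P i))
    (hoff : ∀ z, π z ≠ g i → right Q z = 0) : Q = rescale l m n (P i) := by
  ext s
  rcases s with x | y | z
  · exact congrFun hQ (.inl x)
  · exact congrFun hQ (.inr (.inl y))
  · by_cases hz : π z = g i
    · exact congrFun hQ (.inr (.inr ⟨z, hz⟩))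
    · have hPz : P i (.inr (.inr z)) = 0 := congrFun (h.right_block_eq_zero hz) ⟨z, rfl⟩
      simpa [hPz] using hoff z hz

variable [Fintype ι]

theorem tangentMap_comapRight (f : δ → γ) (D : ι → α ⊕ β ⊕ γ → K) :
    tangentMap (fun i => comapRight f (P i)) (fun i => comapRight f (D i)) =
      tangentMap P D ∘ Prod.map id (Prod.map id f) := by
  ext x
  simp [tangentMap_apply, segreDeriv_apply]

theorem IsContact.comapRight {f : δ → γ} (hf : f.Injective) (h : IsContact P Q) :
    IsContact (fun i => comapRight f (P i)) (comapRight f Q) := by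
  rintro _ ⟨E, rfl⟩
  obtain ⟨E, rfl⟩ := comapRight_surjective hf E
  obtain ⟨D, hD⟩ := h ⟨E, rfl⟩
  exact ⟨_, (tangentMap_comapRight f D).trans (congrArg (· ∘ _) hD)⟩

theorem IsContactDir.comapRight {f : δ → γ} (hf : f.Injective) (h : IsContactDir P i D) :
    IsContactDir (fun i => comapRight f (P i)) i (comapRight f D) := by
  rintro _ ⟨E, rfl⟩
  obtain ⟨E, rfl⟩ := comapRight_surjective hf E
  obtain ⟨D', hD'⟩ := h ⟨E, rfl⟩
  refine ⟨_, (tangentMap_comapRight f D').trans ((congrArg (· ∘ _) hD').trans ?_)⟩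
  ext x
  simp [segreHess_apply]

theorem IsContactDir.isContact (h : IsContactDir P i D) (hi : right (P i) = 0) :
    IsContact P (Sum.elim (left (P i)) (Sum.elim (mid (P i)) (right D))) := by
  rintro _ ⟨E, rfl⟩
  have key : segreDeriv (Sum.elim (left (P i)) (Sum.elim (mid (P i)) (right D))) E =
      segreHess (P i) D (Sum.elim (left E) (Sum.elim (mid E) 0)) + segreDeriv (P i) E := by
    ext x
    have hx : P i (.inr (.inr x.2.2)) = 0 := congrFun hi x.2.2
    simp only [segreDeriv_apply, segreHess_apply, Pi.add_apply, Sum.elim_inl, Sum.elim_inr,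
      Pi.zero_apply, hx]
    ring
  rw [key]
  exact add_mem (h ⟨_, rfl⟩) (range_segreDeriv_le P i ⟨_, rfl⟩)

theorem IsIndep.not_proportional (hP : IsIndep P) {i' : ι} (hi : right (P i) ≠ 0)
    (hi' : right (P i') = 0) {s t : K} (hl : left (P i') = s • left (P i))
    (hm : mid (P i') = t • mid (P i)) : False := by
  classical
  have hne : i ≠ i' := by
    rintro rfl
    exact hi hi'
  have hx : ∀ x, P i' (.inl x) = s * P i (.inl x) := congrFun hl
  have hy : ∀ y, P i' (.inr (.inl y)) = t * P i (.inr (.inl y)) := congrFun hm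
  have h0 : tangentMap P
      (Pi.single i' (rescale 0 0 1 (P i)) - Pi.single i (rescale 0 0 (s * t) (P i))) = 0 := by
    rw [map_sub, tangentMap_apply, tangentMap_apply,
      Finset.sum_eq_single i' (fun j _ hj => by simp [hj]) (by simp),
      Finset.sum_eq_single i (fun j _ hj => by simp [hj]) (by simp)]
    ext x
    simp only [Pi.single_eq_same, Pi.sub_apply, Pi.zero_apply, segreDeriv_apply, rescale_inl,
      rescale_inr_inl, rescale_inr_inr, hx, hy]
    ring
  have h1 := (hP _ h0 i').1 hi'
  refine hi (funext fun z => ?_)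
  simpa [hne.symm] using congrFun h1 z

theorem IsIndep.not_proportional_of_common (hP : IsIndep P) {i' : ι} (hi : right (P i) ≠ 0)
    (hi' : right (P i') = 0) {x : α → K} {y : β → K} (hx : x ≠ 0) (hy : y ≠ 0) {l m l' m' : K}
    (hxi : x = l • left (P i)) (hyi : y = m • mid (P i)) (hxi' : x = l' • left (P i'))
    (hyi' : y = m' • mid (P i')) : False := by
  have hl : l' ≠ 0 := by
    rintro rfl
    exact hx (by simpa using hxi')
  have hm : m' ≠ 0 := by
    rintro rfl
    exact hy (by simpa using hyi')
  refine hP.not_proportional hi hi' (s := l'⁻¹ * l) (t := m'⁻¹ * m) ?_ ?_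
  · rw [mul_smul, ← hxi, hxi', inv_smul_smul₀ hl]
  · rw [mul_smul, ← hyi, hyi', inv_smul_smul₀ hm]

theorem Good.right_eq_zero_of_isContactDir (hP : Good P) (hl : left (P i) ≠ 0)
    (hm : mid (P i) ≠ 0) (hi : right (P i) = 0) (h : IsContactDir P i D) : right D = 0 := by
  by_contra hD
  obtain ⟨i', hi', l, m, n, hQ⟩ := hP.contact
    (Sum.elim (left (P i)) (Sum.elim (mid (P i)) (right D))) hl hm hD (h.isContact hi)
  exact hP.indep.not_proportional_of_common hi' hi hl hm
    (funext fun x => congrFun hQ (.inl x)) (funext fun y => congrFun hQ (.inr (.inl y)))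
    (one_smul K _).symm (one_smul K _).symm

theorem IsBlockSupported.isIndep (h : IsBlockSupported π g P)
    (hind : ∀ j, IsIndep (block π j P)) : IsIndep P := by
  intro D hD i
  refine ⟨fun h0 => (h.right_ne_zero i h0).elim, fun _ => ?_⟩
  have hblock : ∀ j, tangentMap (block π j P) (block π j D) = 0 := fun j => by
    rw [tangentMap_comapRight, hD]
    rfl
  obtain ⟨l, m, n, hlmn, hDi⟩ := (hind _ _ (hblock _) i).2 (h.right_block_ne_zero_iff.mpr rfl)
  exact ⟨l, m, n, hlmn, h.eq_rescale hDi fun z hz =>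
    congrFun ((hind _ _ (hblock _) i).1 (h.right_block_eq_zero hz)) ⟨z, rfl⟩⟩

theorem IsBlockSupported.contact (h : IsBlockSupported π g P) (hg : ∀ j, Good (block π j P))
    (hl : left Q ≠ 0) (hm : mid Q ≠ 0) (hr : right Q ≠ 0) (hQ : IsContact P Q) :
    ∃ i, right (P i) ≠ 0 ∧ ∃ l m n : K, Q = rescale l m n (P i) := by
  have key : ∀ z, right Q z ≠ 0 → ∃ i, π z = g i ∧ ∃ l m n : K,
      comapRight (Subtype.val : {s // π s = g i} → γ) Q =
        rescale l m n (block π (g i) P i) := by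
    intro z hz
    obtain ⟨i, hi, hi'⟩ := (hg (π z)).contact _ hl hm (fun h0 => hz (congrFun h0 ⟨z, rfl⟩))
      (hQ.comapRight Subtype.val_injective)
    have hzi := h.right_block_ne_zero_iff.mp hi
    exact ⟨i, hzi, hzi ▸ hi'⟩
  obtain ⟨o, ho⟩ := Function.ne_iff.mp hr
  obtain ⟨i, -, l, m, n, hi⟩ := key o ho
  refine ⟨i, h.right_ne_zero i, l, m, n, h.eq_rescale hi fun z hz => ?_⟩
  by_contra hz0
  obtain ⟨i', hi', l', m', n', hQ'⟩ := key z hz0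
  exact (hg (g i)).indep.not_proportional_of_common (h.right_block_ne_zero_iff.mpr rfl)
    (h.right_block_eq_zero (i := i') fun e => hz (hi'.trans e.symm)) hl hm
    (funext fun x => congrFun hi (.inl x)) (funext fun y => congrFun hi (.inr (.inl y)))
    (funext fun x => congrFun hQ' (.inl x)) (funext fun y => congrFun hQ' (.inr (.inl y)))

theorem IsBlockSupported.good (h : IsBlockSupported π g P) (hl : ∀ i, left (P i) ≠ 0)
    (hm : ∀ i, mid (P i) ≠ 0) (hg : ∀ j, Good (block π j P)) : Good P where
  indep := h.isIndep fun j => (hg j).indep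
  contact _ := h.contact hg
  reduced i _ D hD := by
    have hD' (j : J) := hD.comapRight (Subtype.val_injective (p := fun z => π z = j))
    obtain ⟨l, m, n, hDi⟩ :=
      (hg (g i)).reduced i (h.right_block_ne_zero_iff.mpr rfl) _ (hD' _)
    exact ⟨l, m, n, h.eq_rescale hDi fun z hz => congrFun ((hg (π z)).right_eq_zero_of_isContactDir
      (hl i) (hm i) (h.right_block_eq_zero hz) (hD' _)) ⟨z, rfl⟩⟩

end Blocks

section ActiveSingletons

variable {ι ρ γ K : Type*} [Field K] {act : ι → Prop} {f : ι → ρ} {R : ι → Set ρ} {w : ι → γ → K}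

/-- The sets attached to the active indices are distinct singletons. -/
structure ActiveSingletons (act : ι → Prop) (f : ι → ρ) (R : ι → Set ρ) : Prop where
  eq_singleton : ∀ i, act i → R i = {f i}
  injOn : Set.InjOn f {i | act i}

/-- The vectors attached to the active indices are nonzero and pairwise independent, the others
vanish. -/
structure ActiveIndep (act : ι → Prop) (w : ι → γ → K) : Prop where
  eq_zero : ∀ i, ¬ act i → w i = 0
  ne_zero : ∀ i, act i → w i ≠ 0
  indep : ∀ i j, act i → act j → i ≠ j → LinearIndependent K ![w i, w j]

/-- The span of the vectors `w j` such that `R j` contains `r`. -/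
abbrev hitSpan (R : ι → Set ρ) (w : ι → γ → K) (r : ρ) : Submodule K (γ → K) :=
  Submodule.span K (w '' {j | r ∈ R j})

theorem sum_smul_mem_hitSpan [Fintype ι] (R : ι → Set ρ) (w : ι → γ → K) (r : ρ) (s : ι → K)
    [DecidablePred fun j => r ∈ R j] : ∑ j with r ∈ R j, s j • w j ∈ hitSpan R w r :=
  sum_mem fun j hj => Submodule.smul_mem _ _
    (Submodule.subset_span ⟨j, (Finset.mem_filter.mp hj).2, rfl⟩)

theorem ActiveSingletons.mem_iff (hR : ActiveSingletons act f R) {i : ι} (hi : act i) {r : ρ} :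
    r ∈ R i ↔ r = f i := by
  rw [hR.eq_singleton i hi, Set.mem_singleton_iff]

theorem ActiveSingletons.eq_of_mem (hR : ActiveSingletons act f R) {i j : ι} (hi : act i)
    (hj : act j) (h : f i ∈ R j) : j = i :=
  hR.injOn hj hi ((hR.mem_iff hj).mp h).symm

theorem ActiveSingletons.mem_hitSpan (hR : ActiveSingletons act f R) {i : ι} (hi : act i) :
    w i ∈ hitSpan R w (f i) :=
  Submodule.subset_span ⟨i, (hR.mem_iff hi).mpr rfl, rfl⟩

open scoped Classical in
theorem ActiveSingletons.sum_filter_mem [Fintype ι] (hR : ActiveSingletons act f R) {i : ι}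
    (hi : act i) {t : ι → γ → K} (ht : ∀ j, ¬ act j → t j = 0) :
    ∑ j with f i ∈ R j, t j = t i := by
  rw [Finset.sum_filter, Finset.sum_eq_single i (fun j _ hj => ?_) (by simp),
    if_pos ((hR.mem_iff hi).mpr rfl)]
  by_cases hja : act j
  · exact if_neg fun h => hj (hR.eq_of_mem hi hja h)
  · rw [ht j hja, ite_self]

theorem ActiveIndep.act_of_ne_zero (hw : ActiveIndep act w) {i : ι} (hi : w i ≠ 0) : act i :=
  not_not.mp fun h => hi (hw.eq_zero i h)

theorem ActiveIndep.eq_zero_of_smul_eq_smul (hw : ActiveIndep act w) {i j : ι} (hi : act i)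
    (hj : act j) (hij : i ≠ j) {s t : K} (h : s • w i = t • w j) : s = 0 :=
  (LinearIndependent.pair_iff.mp (hw.indep i j hi hj hij) s (-t)
    (by rw [h, neg_smul, add_neg_cancel])).1

theorem ActiveIndep.exists_smul_eq (hw : ActiveIndep act w) (hR : ActiveSingletons act f R) {r : ρ}
    {t : γ → K} (ht : t ∈ hitSpan R w r) (ht0 : t ≠ 0) :
    ∃ i, act i ∧ f i = r ∧ ∃ s : K, s • w i = t := by
  obtain ⟨i, hri, hi⟩ : ∃ i, r ∈ R i ∧ act i := by
    by_contra! h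
    refine ht0 ((Submodule.mem_bot K).mp ((Submodule.span_le.mpr ?_) ht))
    rintro _ ⟨j, hj, rfl⟩
    exact hw.eq_zero j (h j hj)
  obtain rfl := (hR.mem_iff hi).mp hri
  refine ⟨i, hi, rfl, Submodule.mem_span_singleton.mp ((Submodule.span_le.mpr ?_) ht)⟩
  rintro _ ⟨j, hj, rfl⟩
  by_cases hja : act j
  · rw [hR.eq_of_mem hi hja hj]
    exact Submodule.mem_span_singleton_self _
  · rw [hw.eq_zero j hja]
    exact zero_mem _

theorem ActiveIndep.eq_zero_of_mem_hitSpan (hw : ActiveIndep act w) (hR : ActiveSingletons act f R)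
    {r r' : ρ} (hr : r ≠ r') {t : γ → K} (ht : t ∈ hitSpan R w r) (ht' : t ∈ hitSpan R w r') :
    t = 0 := by
  by_contra ht0
  obtain ⟨i, hi, rfl, s, rfl⟩ := hw.exists_smul_eq hR ht ht0
  obtain ⟨j, hj, rfl, s', hs'⟩ := hw.exists_smul_eq hR ht' ht0
  exact ht0 (by rw [hw.eq_zero_of_smul_eq_smul hi hj (fun h => hr (h ▸ rfl)) hs'.symm, zero_smul])

theorem ActiveIndep.eq_zero_of_smul_mem_hitSpan (hw : ActiveIndep act w)
    (hR : ActiveSingletons act f R) {i : ι} (hi : act i) {r : ρ} (hr : r ≠ f i) {s : K}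
    (h : s • w i ∈ hitSpan R w r) : s = 0 :=
  (smul_eq_zero.mp (hw.eq_zero_of_mem_hitSpan hR hr h
    (Submodule.smul_mem _ s (hR.mem_hitSpan hi)))).resolve_right (hw.ne_zero i hi)

end ActiveSingletons

section SpecialConfiguration

variable {ι α β γ K : Type*} [Field K] {act : ι → Prop} {p : ι → α} {q : ι → β} {R : ι → Set α}
  {S : ι → Set β} {P : ι → α ⊕ β ⊕ γ → K}

/-- Pairwise disjoint boxes `R i ×ˢ S i` in the grid `α × β`. The boxes of the active indices are
single cells, no two of them in the same row or column. Every row meets some inactive column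
outside of all boxes, and vice versa. The box of an inactive index either meets an inactive row in
an inactive column, or meets two rows in the same inactive column, or vice versa. -/
structure IsPattern (act : ι → Prop) (p : ι → α) (q : ι → β) (R : ι → Set α) (S : ι → Set β) :
    Prop where
  rows : ActiveSingletons act p R
  cols : ActiveSingletons act q S
  disjoint : ∀ i j x y, x ∈ R i → y ∈ S i → x ∈ R j → y ∈ S j → i = j
  row : ∀ x, ∃ y, (∀ j, act j → q j ≠ y) ∧ ∀ j, x ∈ R j → y ∉ S j
  col : ∀ y, ∃ x, (∀ j, act j → p j ≠ x) ∧ ∀ j, x ∈ R j → y ∉ S j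
  box : ∀ i, ¬ act i →
    (∃ x ∈ R i, ∃ y ∈ S i, (∀ j, act j → p j ≠ x) ∧ ∀ j, act j → q j ≠ y) ∨
    (∃ y ∈ S i, (∀ j, act j → q j ≠ y) ∧ ∃ x ∈ R i, ∃ x' ∈ R i, x ≠ x') ∨
    (∃ x ∈ R i, (∀ j, act j → p j ≠ x) ∧ ∃ y ∈ S i, ∃ y' ∈ S i, y ≠ y')

/-- The configuration attached to a pattern: the first two factors are indicator functions of the
sides of the boxes, and only the active points have a nonzero third factor. -/
structure IsSpecial (act : ι → Prop) (p : ι → α) (q : ι → β) (R : ι → Set α) (S : ι → Set β)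
    (P : ι → α ⊕ β ⊕ γ → K) : Prop extends IsPattern act p q R S where
  left_eq : ∀ i, left (P i) = (R i).indicator 1
  mid_eq : ∀ i, mid (P i) = (S i).indicator 1
  activeIndep : ActiveIndep act fun i => right (P i)

namespace IsSpecial

theorem eq_rescale (h : IsSpecial act p q R S P) {i : ι} (hi : act i) {Q : α ⊕ β ⊕ γ → K} {n : K}
    (hl : ∀ x, x ≠ p i → left Q x = 0) (hm : ∀ y, y ≠ q i → mid Q y = 0)
    (hr : right Q = n • right (P i)) :
    Q = rescale (left Q (p i)) (mid Q (q i)) n (P i) := by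
  classical
  have hPl : ∀ x, P i (.inl x) = (R i).indicator 1 x := fun x => congrFun (h.left_eq i) x
  have hPm : ∀ y, P i (.inr (.inl y)) = (S i).indicator 1 y := fun y => congrFun (h.mid_eq i) y
  ext s
  rcases s with x | y | z
  · by_cases hx : x = p i
    · simp [hPl, hx, (h.rows.mem_iff hi).mpr]
    · simpa [hPl, hx, h.rows.mem_iff hi] using hl x hx
  · by_cases hy : y = q i
    · simp [hPm, hy, (h.cols.mem_iff hi).mpr]
    · simpa [hPm, hy, h.cols.mem_iff hi] using hm y hy
  · exact congrFun hr z

variable [Fintype ι]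

open scoped Classical in
theorem tangentMap_apply (h : IsSpecial act p q R S P) (D : ι → α ⊕ β ⊕ γ → K) (x : α) (y : β) :
    (fun z => tangentMap P D (x, y, z)) =
      ∑ j with y ∈ S j, left (D j) x • right (P j) +
      ∑ j with x ∈ R j, mid (D j) y • right (P j) +
      ∑ j with x ∈ R j ∧ y ∈ S j, right (D j) := by
  ext z
  have hl : ∀ j, P j (.inl x) = (R j).indicator 1 x := fun j => congrFun (h.left_eq j) x
  have hm : ∀ j, P j (.inr (.inl y)) = (S j).indicator 1 y := fun j => congrFun (h.mid_eq j) y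
  simp only [SegreContact.tangentMap_apply, segreDeriv_apply, Finset.sum_apply, Pi.add_apply,
    Finset.sum_filter, ← Finset.sum_add_distrib, hl, hm, Set.indicator_apply, Pi.one_apply]
  refine Finset.sum_congr rfl fun j _ => ?_
  by_cases hx : x ∈ R j <;> by_cases hy : y ∈ S j <;> simp [hx, hy]

open scoped Classical in
theorem exists_mem_hitSpan_row (h : IsSpecial act p q R S P) (D : ι → α ⊕ β ⊕ γ → K) (x : α)
    {y : β} (hy : ∀ j, act j → q j ≠ y) :
    ∃ t ∈ hitSpan R (fun j => right (P j)) x, (fun z => tangentMap P D (x, y, z)) =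
      t + ∑ j with x ∈ R j ∧ y ∈ S j, right (D j) := by
  refine ⟨_, sum_smul_mem_hitSpan R _ x fun j => mid (D j) y, ?_⟩
  rw [h.tangentMap_apply, Finset.sum_eq_zero (s := {j | y ∈ S j}), zero_add]
  intro j hj
  by_cases hja : act j
  · exact (hy j hja ((h.cols.mem_iff hja).mp (Finset.mem_filter.mp hj).2).symm).elim
  · rw [h.activeIndep.eq_zero j hja, smul_zero]

open scoped Classical in
theorem exists_mem_hitSpan_col (h : IsSpecial act p q R S P) (D : ι → α ⊕ β ⊕ γ → K) (y : β)
    {x : α} (hx : ∀ j, act j → p j ≠ x) :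
    ∃ t ∈ hitSpan S (fun j => right (P j)) y, (fun z => tangentMap P D (x, y, z)) =
      t + ∑ j with x ∈ R j ∧ y ∈ S j, right (D j) := by
  refine ⟨_, sum_smul_mem_hitSpan S _ y fun j => left (D j) x, ?_⟩
  rw [h.tangentMap_apply, Finset.sum_eq_zero (s := {j | x ∈ R j}), add_zero]
  intro j hj
  by_cases hja : act j
  · exact (hx j hja ((h.rows.mem_iff hja).mp (Finset.mem_filter.mp hj).2).symm).elim
  · rw [h.activeIndep.eq_zero j hja, smul_zero]

theorem exists_row_mem_hitSpan (h : IsSpecial act p q R S P) (x : α) :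
    ∃ y, ∀ T ∈ LinearMap.range (tangentMap P),
      (fun z => T (x, y, z)) ∈ hitSpan R (fun j => right (P j)) x := by
  classical
  obtain ⟨y, hy, hfree⟩ := h.row x
  refine ⟨y, ?_⟩
  rintro _ ⟨D, rfl⟩
  obtain ⟨t, ht, hT⟩ := h.exists_mem_hitSpan_row D x hy
  rwa [hT, Finset.filter_false_of_mem fun j _ hj => hfree j hj.1 hj.2, Finset.sum_empty, add_zero]

theorem exists_col_mem_hitSpan (h : IsSpecial act p q R S P) (y : β) :
    ∃ x, ∀ T ∈ LinearMap.range (tangentMap P),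
      (fun z => T (x, y, z)) ∈ hitSpan S (fun j => right (P j)) y := by
  classical
  obtain ⟨x, hx, hfree⟩ := h.col y
  refine ⟨x, ?_⟩
  rintro _ ⟨D, rfl⟩
  obtain ⟨t, ht, hT⟩ := h.exists_mem_hitSpan_col D y hx
  rwa [hT, Finset.filter_false_of_mem fun j _ hj => hfree j hj.1 hj.2, Finset.sum_empty, add_zero]

section Indep

variable {D : ι → α ⊕ β ⊕ γ → K}

open scoped Classical in
theorem sum_box_eq (h : IsSpecial act p q R S P) {i : ι} {x : α} {y : β} (hx : x ∈ R i)
    (hy : y ∈ S i) (t : ι → γ → K) : ∑ j with x ∈ R j ∧ y ∈ S j, t j = t i := by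
  rw [show ({j | x ∈ R j ∧ y ∈ S j} : Finset ι) = {i} from ?_, Finset.sum_singleton]
  ext j
  simp only [Finset.mem_filter_univ, Finset.mem_singleton]
  exact ⟨fun hj => h.disjoint j i x y hj.1 hj.2 hx hy, by rintro rfl; exact ⟨hx, hy⟩⟩

theorem right_mem_hitSpan_row (h : IsSpecial act p q R S P) (hD : tangentMap P D = 0) {i : ι}
    {x : α} {y : β} (hx : x ∈ R i) (hy : y ∈ S i) (hya : ∀ j, act j → q j ≠ y) :
    right (D i) ∈ hitSpan R (fun j => right (P j)) x := by
  classical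
  obtain ⟨t, ht, hT⟩ := h.exists_mem_hitSpan_row D x hya
  rw [h.sum_box_eq hx hy, hD] at hT
  exact (neg_eq_of_add_eq_zero_right hT.symm) ▸ neg_mem ht

theorem right_mem_hitSpan_col (h : IsSpecial act p q R S P) (hD : tangentMap P D = 0) {i : ι}
    {x : α} {y : β} (hx : x ∈ R i) (hy : y ∈ S i) (hxa : ∀ j, act j → p j ≠ x) :
    right (D i) ∈ hitSpan S (fun j => right (P j)) y := by
  classical
  obtain ⟨t, ht, hT⟩ := h.exists_mem_hitSpan_col D y hxa
  rw [h.sum_box_eq hx hy, hD] at hT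
  exact (neg_eq_of_add_eq_zero_right hT.symm) ▸ neg_mem ht

theorem right_eq_zero_of_tangentMap_eq_zero (h : IsSpecial act p q R S P)
    (hD : tangentMap P D = 0) {i : ι} (hi : ¬ act i) : right (D i) = 0 := by
  rcases h.box i hi with ⟨x, hx, y, hy, hxa, hya⟩ | ⟨y, hy, hya, x, hx, x', hx', hne⟩ |
    ⟨x, hx, hxa, y, hy, y', hy', hne⟩
  · by_contra h0
    obtain ⟨j, hj, hjx, -⟩ :=
      h.activeIndep.exists_smul_eq h.rows (h.right_mem_hitSpan_row hD hx hy hya) h0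
    exact hxa j hj hjx
  · exact h.activeIndep.eq_zero_of_mem_hitSpan h.rows hne (h.right_mem_hitSpan_row hD hx hy hya)
      (h.right_mem_hitSpan_row hD hx' hy hya)
  · exact h.activeIndep.eq_zero_of_mem_hitSpan h.cols hne (h.right_mem_hitSpan_col hD hx hy hxa)
      (h.right_mem_hitSpan_col hD hx hy' hxa)

open scoped Classical in
theorem sum_box_eq_zero (h : IsSpecial act p q R S P) (hD : tangentMap P D = 0) {x : α} {y : β}
    (hxy : ∀ j, act j → p j = x → q j ≠ y) :
    ∑ j with x ∈ R j ∧ y ∈ S j, right (D j) = 0 := by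
  refine Finset.sum_eq_zero fun j hj => ?_
  obtain ⟨-, hx, hy⟩ := Finset.mem_filter.mp hj
  by_cases hja : act j
  · exact (hxy j hja ((h.rows.mem_iff hja).mp hx).symm ((h.cols.mem_iff hja).mp hy).symm).elim
  · exact h.right_eq_zero_of_tangentMap_eq_zero hD hja

theorem left_eq_zero_of_tangentMap_eq_zero (h : IsSpecial act p q R S P)
    (hD : tangentMap P D = 0) {i : ι} (hi : act i) {x : α} (hx : x ≠ p i) : left (D i) x = 0 := by
  classical
  have h0 := h.tangentMap_apply D x (q i)
  rw [hD, h.sum_box_eq_zero hD fun j hj hjx hji => hx (by rw [← hjx, h.cols.injOn hj hi hji]),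
    h.cols.sum_filter_mem hi fun j hj => by rw [h.activeIndep.eq_zero j hj, smul_zero],
    add_zero] at h0
  refine h.activeIndep.eq_zero_of_smul_mem_hitSpan h.rows hi hx ?_
  exact (neg_eq_of_add_eq_zero_left h0.symm) ▸ neg_mem (sum_smul_mem_hitSpan R _ x _)

theorem mid_eq_zero_of_tangentMap_eq_zero (h : IsSpecial act p q R S P)
    (hD : tangentMap P D = 0) {i : ι} (hi : act i) {y : β} (hy : y ≠ q i) : mid (D i) y = 0 := by
  classical
  have h0 := h.tangentMap_apply D (p i) y
  rw [hD, h.sum_box_eq_zero hD fun j hj hji hjy => hy (by rw [← hjy, h.rows.injOn hj hi hji]),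
    h.rows.sum_filter_mem hi fun j hj => by rw [h.activeIndep.eq_zero j hj, smul_zero],
    add_zero] at h0
  refine h.activeIndep.eq_zero_of_smul_mem_hitSpan h.cols hi hy ?_
  exact (neg_eq_of_add_eq_zero_right h0.symm) ▸ neg_mem (sum_smul_mem_hitSpan S _ y _)

theorem add_right_eq_zero_of_tangentMap_eq_zero (h : IsSpecial act p q R S P)
    (hD : tangentMap P D = 0) {i : ι} (hi : act i) :
    left (D i) (p i) • right (P i) + mid (D i) (q i) • right (P i) +
      right (D i) = 0 := by
  classical
  have h0 := h.tangentMap_apply D (p i) (q i)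
  rw [hD, h.sum_box_eq ((h.rows.mem_iff hi).mpr rfl) ((h.cols.mem_iff hi).mpr rfl),
    h.rows.sum_filter_mem hi fun j hj => by rw [h.activeIndep.eq_zero j hj, smul_zero],
    h.cols.sum_filter_mem hi fun j hj => by rw [h.activeIndep.eq_zero j hj, smul_zero]] at h0
  exact h0.symm

theorem isIndep (h : IsSpecial act p q R S P) : IsIndep P := by
  intro D hD i
  refine ⟨fun hi0 => h.right_eq_zero_of_tangentMap_eq_zero hD
    fun hi => h.activeIndep.ne_zero i hi hi0, fun hi0 => ?_⟩
  have hi := h.activeIndep.act_of_ne_zero hi0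
  refine ⟨_, _, -(left (D i) (p i) + mid (D i) (q i)), add_neg_cancel _, h.eq_rescale hi
    (fun x => h.left_eq_zero_of_tangentMap_eq_zero hD hi)
    (fun y => h.mid_eq_zero_of_tangentMap_eq_zero hD hi) ?_⟩
  rw [neg_smul, add_smul]
  exact (neg_eq_of_add_eq_zero_right (h.add_right_eq_zero_of_tangentMap_eq_zero hD hi)).symm

end Indep

section Contact

variable {Q D : α ⊕ β ⊕ γ → K} {i : ι}

theorem right_mem_hitSpan_row_of_isContact (h : IsSpecial act p q R S P) (hQ : IsContact P Q)
    {x : α} (hx : left Q x ≠ 0) :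
    right Q ∈ hitSpan R (fun j => right (P j)) x := by
  obtain ⟨y, hy⟩ := h.exists_row_mem_hitSpan x
  have hT := hy _ (hQ ⟨Sum.elim 0 (Sum.elim 1 0), rfl⟩)
  refine (Submodule.smul_mem_iff _ hx).mp ((congrArg (· ∈ _) ?_).mp hT)
  ext z
  simp [segreDeriv_apply]

theorem right_mem_hitSpan_col_of_isContact (h : IsSpecial act p q R S P) (hQ : IsContact P Q)
    {y : β} (hy : mid Q y ≠ 0) :
    right Q ∈ hitSpan S (fun j => right (P j)) y := by
  obtain ⟨x, hx⟩ := h.exists_col_mem_hitSpan y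
  have hT := hx _ (hQ ⟨Sum.elim 1 0, rfl⟩)
  refine (Submodule.smul_mem_iff _ hy).mp ((congrArg (· ∈ _) ?_).mp hT)
  ext z
  simp [segreDeriv_apply]

theorem contact (h : IsSpecial act p q R S P) (hl : left Q ≠ 0) (hr : right Q ≠ 0)
    (hQ : IsContact P Q) :
    ∃ i, right (P i) ≠ 0 ∧ ∃ l m n : K, Q = rescale l m n (P i) := by
  obtain ⟨x, hx⟩ := Function.ne_iff.mp hl
  have hxQ := h.right_mem_hitSpan_row_of_isContact hQ hx
  obtain ⟨i, hi, rfl, n, hn⟩ := h.activeIndep.exists_smul_eq h.rows hxQ hr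
  refine ⟨i, h.activeIndep.ne_zero i hi, _, _, n,
    h.eq_rescale hi (fun x' hx' => ?_) (fun y hy => ?_) hn.symm⟩
  · by_contra hne
    exact hr (h.activeIndep.eq_zero_of_mem_hitSpan h.rows hx'
      (h.right_mem_hitSpan_row_of_isContact hQ hne) hxQ)
  · by_contra hne
    exact hr (h.activeIndep.eq_zero_of_mem_hitSpan h.cols hy
      (h.right_mem_hitSpan_col_of_isContact hQ hne)
      (hn ▸ Submodule.smul_mem _ n (h.cols.mem_hitSpan hi)))

theorem smul_add_mem_hitSpan_row (h : IsSpecial act p q R S P) (hD : IsContactDir P i D) (x : α) :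
    left D x • right (P i) + left (P i) x • right D ∈
      hitSpan R (fun j => right (P j)) x := by
  obtain ⟨y, hy⟩ := h.exists_row_mem_hitSpan x
  convert hy _ (hD ⟨Sum.elim 0 (Sum.elim 1 0), rfl⟩) using 1
  ext z
  simp [segreHess_apply]

theorem smul_add_mem_hitSpan_col (h : IsSpecial act p q R S P) (hD : IsContactDir P i D) (y : β) :
    mid D y • right (P i) + mid (P i) y • right D ∈
      hitSpan S (fun j => right (P j)) y := by
  obtain ⟨x, hx⟩ := h.exists_col_mem_hitSpan y
  convert hx _ (hD ⟨Sum.elim 1 0, rfl⟩) using 1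
  ext z
  simp [segreHess_apply]

theorem reduced (h : IsSpecial act p q R S P) (hi : act i) (hD : IsContactDir P i D) :
    ∃ l m n : K, D = rescale l m n (P i) := by
  classical
  have hr : right D ∈ hitSpan R (fun j => right (P j)) (p i) := by
    have := h.smul_add_mem_hitSpan_row hD (p i)
    rwa [Submodule.add_mem_iff_right _ (Submodule.smul_mem _ _ (h.rows.mem_hitSpan hi)), h.left_eq,
      Set.indicator_of_mem ((h.rows.mem_iff hi).mpr rfl), Pi.one_apply, one_smul] at this
  obtain ⟨n, hn⟩ : ∃ n : K, n • right (P i) = right D := by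
    by_cases h0 : right D = 0
    · exact ⟨0, by rw [h0, zero_smul]⟩
    · obtain ⟨j, hj, hji, n, hn⟩ := h.activeIndep.exists_smul_eq h.rows hr h0
      exact ⟨n, h.rows.injOn hj hi hji ▸ hn⟩
  refine ⟨_, _, n, h.eq_rescale hi (fun x hx => ?_) (fun y hy => ?_) hn.symm⟩
  · have := h.smul_add_mem_hitSpan_row hD x
    rw [h.left_eq, Set.indicator_of_notMem (mt (h.rows.mem_iff hi).mp hx), zero_smul,
      add_zero] at this
    exact h.activeIndep.eq_zero_of_smul_mem_hitSpan h.rows hi hx this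
  · have := h.smul_add_mem_hitSpan_col hD y
    rw [h.mid_eq, Set.indicator_of_notMem (mt (h.cols.mem_iff hi).mp hy), zero_smul,
      add_zero] at this
    exact h.activeIndep.eq_zero_of_smul_mem_hitSpan h.cols hi hy this

theorem good (h : IsSpecial act p q R S P) : Good P where
  indep := h.isIndep
  contact _ hl _ hr := h.contact hl hr
  reduced _ hi _ := h.reduced (h.activeIndep.act_of_ne_zero hi)

end Contact

end IsSpecial

end SpecialConfiguration

section Counting

theorem lt_of_mul_le_add {A B C m k n : ℤ} (hA : 4 ≤ A) (hAB : A ≤ B) (hBC : B ≤ C)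
    (hm : C ≤ 2 * m + 1) (hk : k * (A + B + C - 2) ≤ C * (A * B - (A + B + C - 2)))
    (hn : m * n ≤ k + m - 1) : n < A := by
  by_contra! hAn
  have hmk : m * (A - 1) + 1 ≤ k := by nlinarith
  have hS : 2 * B + 2 ≤ A + B + C - 2 := by linarith
  have hkC : 2 * k + 2 * C ≤ C * A := by
    refine le_of_mul_le_mul_right ?_ (by linarith : 0 < A + B + C - 2)
    nlinarith [mul_le_mul_of_nonneg_left hS
      (mul_nonneg (by linarith : 0 ≤ C) (by linarith : 0 ≤ A))]
  nlinarith

theorem mul_size_le {A B C m k : ℤ} (hA : 4 ≤ A) (hAB : A ≤ B) (hBC : B ≤ C)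
    (hm : C = 2 * m ∨ C = 2 * m + 1)
    (hk : k * (A + B + C - 2) ≤ C * (A * B - (A + B + C - 2))) :
    k * (2 * m + A + B - 4) ≤
      m * (2 * (A * B) - 2 * B + 2) - (A + B - 4) * (m - 1) - (A + B) * m := by
  have hS : 0 < A + B + C - 2 := by linarith
  have hCB : 0 ≤ C * (C - B) := mul_nonneg (by linarith) (by linarith)
  have hAB0 : 0 < A * B := mul_pos (by linarith) (by linarith)
  refine le_of_mul_le_mul_right ?_ hS
  refine le_trans (by linarith)
    ((mul_le_mul_of_nonneg_right hk (by omega : 0 ≤ 2 * m + A + B - 4)).trans ?_)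
  rcases hm with rfl | rfl
  · have hlow : -(2 * m * (2 * m - B)) + 2 * m - A - B + 4 ≤ 0 := by
      rcases hBC.eq_or_lt with h | h
      · rw [← h]; nlinarith
      · nlinarith
    nlinarith [mul_nonneg hS.le (neg_nonneg.mpr hlow), mul_pos (by omega : 0 < m) hAB0]
  · have hlow : 2 * (2 * m + 1) - 2 * A - 3 * B - (2 * m + 1) * (2 * m + 1 - B) + 7 ≤ 0 := by
      rcases hBC.eq_or_lt with h | h
      · rw [← h]; nlinarith
      · rcases (Int.add_one_le_iff.mpr h).eq_or_lt with h' | h'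
        · rw [← h']; nlinarith
        · nlinarith [h']
    nlinarith [mul_nonneg hS.le (neg_nonneg.mpr hlow),
      mul_nonneg hAB0.le (by linarith : 0 ≤ 2 + 2 * (2 * m + 1) - A - B)]

theorem two_mul_size_le {A B C m k n : ℤ} (hA : 4 ≤ A) (hAB : A ≤ B) (hBC : B ≤ C)
    (hm : C = 2 * m ∨ C = 2 * m + 1)
    (hk : k * (A + B + C - 2) ≤ C * (A * B - (A + B + C - 2))) (hn : m * n ≤ k + m - 1) :
    2 * k + (A + B - 4) * n + (A + B) ≤ 2 * (A * B) - 2 * B + 2 := by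
  refine le_of_mul_le_mul_left ?_ (by omega : 0 < m)
  nlinarith [mul_le_mul_of_nonneg_left hn (by linarith : 0 ≤ A + B - 4),
    mul_size_le hA hAB hBC hm hk]

/-- The number of free cells of an `A × B` grid with `n` active cells: `(A - n - 1) * (B - n)` cells
off the staircase, and two families of pairs of adjacent cells. -/
abbrev numFreeCells (A B n : ℕ) : ℕ :=
  (A - n - 1) * (B - n) + (n / 2 * (B - n - 1) + n / 2 * (A - n - 1))

theorem le_add_numFreeCells {A B k n : ℕ} (hn : n < A) (hAB : A ≤ B)
    (hk : 2 * (k : ℤ) + (A + B - 4) * n + (A + B) ≤ 2 * (A * B) - 2 * B + 2) :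
    k ≤ n + numFreeCells A B n := by
  obtain ⟨A, rfl⟩ := Nat.exists_eq_add_of_lt hn
  obtain ⟨B, rfl⟩ := Nat.exists_eq_add_of_le hAB
  rw [numFreeCells, show n + A + 1 - n - 1 = A by omega,
    show n + A + 1 + B - n = A + B + 1 by omega, show A + B + 1 - 1 = A + B by omega]
  zify at hk ⊢
  obtain ⟨h, rfl | rfl⟩ := Nat.even_or_odd' n
  · push_cast at hk ⊢
    rw [show (2 * (h : ℤ)) / 2 = h by omega]
    nlinarith
  · push_cast at hk ⊢
    rw [show (2 * (h : ℤ) + 1) / 2 = h by omega]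
    nlinarith

variable {A B C k : ℕ}

theorem lt_and_le_add_numFreeCells {n : ℕ} (hA : 4 ≤ A) (hAB : A ≤ B) (hBC : B ≤ C)
    (hk : k * (A + B + C - 2) + C * (A + B + C - 2) ≤ A * B * C)
    (hn : C / 2 * n + 1 ≤ k + C / 2) : n < A ∧ k ≤ n + numFreeCells A B n := by
  have hS : 2 ≤ A + B + C := by omega
  zify [hS] at hk
  have hn' : ((C / 2 : ℕ) : ℤ) * n ≤ k + (C / 2 : ℕ) - 1 := by
    zify at hn ⊢
    linarith
  have hk' : (k : ℤ) * (A + B + C - 2) ≤ C * (A * B - (A + B + C - 2)) := by linarith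
  have hlt : (n : ℤ) < A :=
    lt_of_mul_le_add (by omega) (by omega) (by omega) (by omega) hk' hn'
  exact ⟨by omega, le_add_numFreeCells (by omega) hAB
    (two_mul_size_le (by omega) (by omega) (by omega) (by omega) hk' hn')⟩

theorem card_mod_eq_le {m j : ℕ} (hm : 0 < m) :
    m * Fintype.card {i : Fin k // (i : ℕ) % m = j} + 1 ≤ k + m := by
  by_cases hj : j < m
  · have hcount : Fintype.card {i : Fin k // (i : ℕ) % m = j} =
        k / m + if j < k % m then 1 else 0 := by
      have := Nat.count_modEq_card k hm j
      rw [Nat.count_eq_card_filter_range, ← Nat.Iio_eq_range, ← Fin.map_valEmbedding_univ,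
        Finset.filter_map, Finset.card_map, Nat.mod_eq_of_lt hj] at this
      simpa only [Fintype.card_subtype, Nat.ModEq, Nat.mod_eq_of_lt hj, Function.comp_apply,
        Fin.valEmbedding_apply] using this
    have := Nat.div_add_mod k m
    rw [hcount, mul_add]
    split_ifs <;> omega
  · have : IsEmpty {i : Fin k // (i : ℕ) % m = j} := ⟨fun i => hj (i.2 ▸ Nat.mod_lt _ hm)⟩
    rw [Fintype.card_eq_zero]
    omega

end Counting

section GridPattern

/-- The cells of an `A × B` grid available to the inactive indices when the diagonal cells `(r, r)`
with `r < n` are active: cells `(x, y)` off the staircase `x = min y (A - 1)`, and cells standing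
for a pair `{x, x + 1} × {y}` or `{x} × {y, y + 1}` meeting two active rows or columns. -/
def IsFreeCell (A B n x y : ℕ) : Prop :=
  (n ≤ x ∧ x < A ∧ n ≤ y ∧ y < B ∧ x ≠ min y (A - 1)) ∨
    (x % 2 = 0 ∧ x + 1 < n ∧ n ≤ y ∧ y + 1 < B) ∨ (y % 2 = 0 ∧ y + 1 < n ∧ n ≤ x ∧ x + 1 < A)

/-- The active indices enumerate diagonal cells `(r, r)` with `r < n`, the inactive ones distinct
free cells. -/
structure IsGridPattern {ι : Type*} (A B n : ℕ) (act : ι → Prop) (p q : ι → ℕ) : Prop where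
  lt : n < A
  le : A ≤ B
  active : ∀ i, act i → p i < n ∧ q i = p i
  active_injOn : Set.InjOn p {i | act i}
  isFreeCell : ∀ i, ¬ act i → IsFreeCell A B n (p i) (q i)
  inactive_inj : ∀ i j, ¬ act i → ¬ act j → p i = p j → q i = q j → i = j

/-- The rows (or columns) of the box attached to the cell of the index `i`. -/
def boxSide {ι : Type*} {A : ℕ} (n : ℕ) (act : ι → Prop) (p : ι → ℕ) (i : ι) : Set (Fin A) :=
  {x | (x : ℕ) = p i ∨ (¬ act i ∧ p i < n ∧ (x : ℕ) = p i + 1)}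

namespace IsGridPattern

variable {ι : Type*} {A B n : ℕ} {act : ι → Prop} {p q : ι → ℕ}

theorem left_lt (h : IsGridPattern A B n act p q) (i : ι) : p i < A := by
  have := h.lt
  have := h.active i
  have := h.isFreeCell i
  unfold IsFreeCell at this
  by_cases act i <;> grind

theorem right_lt (h : IsGridPattern A B n act p q) (i : ι) : q i < B := by
  have := h.lt
  have := h.le
  have := h.active i
  have := h.isFreeCell i
  unfold IsFreeCell at this
  by_cases act i <;> grind

theorem activeSingletons_boxSide (hp : ∀ i, p i < A) (hinj : Set.InjOn p {i | act i}) :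
    ActiveSingletons act (fun i => (⟨p i, hp i⟩ : Fin A)) (boxSide n act p) where
  eq_singleton i hi := by
    ext x
    simp [boxSide, hi, Fin.ext_iff]
  injOn i hi j hj hij := hinj hi hj (Fin.mk.inj hij)

theorem eq_of_mem_boxSide (h : IsGridPattern A B n act p q) {i j : ι} {x : Fin A} {y : Fin B}
    (hix : x ∈ boxSide n act p i) (hiy : y ∈ boxSide n act q i) (hjx : x ∈ boxSide n act p j)
    (hjy : y ∈ boxSide n act q j) : i = j := by
  have hi := h.isFreeCell i
  have hj := h.isFreeCell j
  have hai := h.active i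
  have haj := h.active j
  simp only [boxSide, Set.mem_ofPred_eq] at hix hiy hjx hjy
  unfold IsFreeCell at hi hj
  by_cases hia : act i <;> by_cases hja : act j <;>
    simp only [hia, hja, not_true, not_false_eq_true, false_and, or_false, true_and,
      forall_const] at hi hj hai haj hix hiy hjx hjy
  · exact h.active_injOn hia hja (by omega)
  · omega
  · omega
  · exact h.inactive_inj i j hia hja (by omega) (by omega)

theorem exists_free_in_row (h : IsGridPattern A B n act p q) (x : Fin A) :
    ∃ y : Fin B, (∀ j, act j → (⟨q j, h.right_lt j⟩ : Fin B) ≠ y) ∧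
      ∀ j, x ∈ boxSide n act p j → y ∉ boxSide n act q j := by
  have hnA := h.lt
  have hAB := h.le
  have hx := x.2
  obtain ⟨y, hyn, hyB, hy⟩ : ∃ y, n ≤ y ∧ y < B ∧ (n ≤ x ∧ y = x ∨ x < n ∧ y = B - 1) := by
    by_cases hxn : n ≤ x
    · exact ⟨x, hxn, by omega, by omega⟩
    · exact ⟨B - 1, by omega, by omega, by omega⟩
  refine ⟨⟨y, hyB⟩, fun j hj => ?_, fun j => ?_⟩
  · have := h.active j hj
    simp only [ne_eq, Fin.mk.injEq]
    omega
  · have hfree := h.isFreeCell j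
    have hact := h.active j
    unfold IsFreeCell at hfree
    simp only [boxSide, Set.mem_ofPred_eq]
    by_cases hj : act j <;>
      simp only [hj, not_true, not_false_eq_true, false_and, or_false, true_and,
        forall_const] at hfree hact ⊢ <;> omega

theorem exists_free_in_col (h : IsGridPattern A B n act p q) (y : Fin B) :
    ∃ x : Fin A, (∀ j, act j → (⟨p j, h.left_lt j⟩ : Fin A) ≠ x) ∧
      ∀ j, x ∈ boxSide n act p j → y ∉ boxSide n act q j := by
  have hnA := h.lt
  obtain ⟨x, hxn, hxA, hx⟩ : ∃ x, n ≤ x ∧ x < A ∧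
      (n ≤ y ∧ x = min (y : ℕ) (A - 1) ∨ y < n ∧ x = A - 1) := by
    by_cases hyn : n ≤ y
    · exact ⟨min y (A - 1), by omega, by omega, by omega⟩
    · exact ⟨A - 1, by omega, by omega, by omega⟩
  refine ⟨⟨x, hxA⟩, fun j hj => ?_, fun j => ?_⟩
  · have := h.active j hj
    simp only [ne_eq, Fin.mk.injEq]
    omega
  · have hfree := h.isFreeCell j
    have hact := h.active j
    unfold IsFreeCell at hfree
    simp only [boxSide, Set.mem_ofPred_eq]
    by_cases hj : act j <;>
      simp only [hj, not_true, not_false_eq_true, false_and, or_false, true_and,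
        forall_const] at hfree hact ⊢ <;> omega

theorem exists_mem_boxSide (h : IsGridPattern A B n act p q) (i : ι) (hi : ¬ act i) :
    (∃ x ∈ boxSide n act p i, ∃ y ∈ boxSide n act q i,
      (∀ j, act j → (⟨p j, h.left_lt j⟩ : Fin A) ≠ x) ∧
        ∀ j, act j → (⟨q j, h.right_lt j⟩ : Fin B) ≠ y) ∨
    (∃ y ∈ boxSide n act q i, (∀ j, act j → (⟨q j, h.right_lt j⟩ : Fin B) ≠ y) ∧
      ∃ x ∈ boxSide (A := A) n act p i, ∃ x' ∈ boxSide n act p i, x ≠ x') ∨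
    (∃ x ∈ boxSide n act p i, (∀ j, act j → (⟨p j, h.left_lt j⟩ : Fin A) ≠ x) ∧
      ∃ y ∈ boxSide (A := B) n act q i, ∃ y' ∈ boxSide n act q i, y ≠ y') := by
  have hnA := h.lt
  have hAB := h.le
  have hp : n ≤ p i → ∀ j, act j → (⟨p j, h.left_lt j⟩ : Fin A) ≠ ⟨p i, h.left_lt i⟩ :=
    fun hin j hj hij => by have := h.active j hj; have := Fin.mk.inj hij; omega
  have hq : n ≤ q i → ∀ j, act j → (⟨q j, h.right_lt j⟩ : Fin B) ≠ ⟨q i, h.right_lt i⟩ :=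
    fun hin j hj hij => by have := h.active j hj; have := Fin.mk.inj hij; omega
  have hpi : (⟨p i, h.left_lt i⟩ : Fin A) ∈ boxSide n act p i := .inl rfl
  have hqi : (⟨q i, h.right_lt i⟩ : Fin B) ∈ boxSide n act q i := .inl rfl
  rcases h.isFreeCell i hi with ⟨hpn, -, hqn, -⟩ | ⟨-, hpn, hqn, -⟩ | ⟨-, hqn, hpn, -⟩
  · exact .inl ⟨_, hpi, _, hqi, hp hpn, hq hqn⟩
  · exact .inr (.inl ⟨_, hqi, hq hqn, _, hpi, ⟨p i + 1, by omega⟩,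
      .inr ⟨hi, by omega, rfl⟩, by simp⟩)
  · exact .inr (.inr ⟨_, hpi, hp hpn, _, hqi, ⟨q i + 1, by omega⟩,
      .inr ⟨hi, by omega, rfl⟩, by simp⟩)

theorem isPattern (h : IsGridPattern A B n act p q) :
    IsPattern act (fun i => ⟨p i, h.left_lt i⟩) (fun i => ⟨q i, h.right_lt i⟩)
      (boxSide (A := A) n act p) (boxSide (A := B) n act q) where
  rows := activeSingletons_boxSide h.left_lt h.active_injOn
  cols := activeSingletons_boxSide h.right_lt fun i hi j hj hij =>
    h.active_injOn hi hj (by rw [← (h.active i hi).2, ← (h.active j hj).2, hij])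
  disjoint := fun _ _ _ _ => h.eq_of_mem_boxSide
  row := h.exists_free_in_row
  col := h.exists_free_in_col
  box := h.exists_mem_boxSide

end IsGridPattern

/-- An enumeration of the free cells of an `A × B` grid with `n` active cells. -/
def freeCell (A B n : ℕ) :
    (Fin (A - n - 1) × Fin (B - n)) ⊕ (Fin (n / 2) × Fin (B - n - 1)) ⊕
      (Fin (n / 2) × Fin (A - n - 1)) → ℕ × ℕ
  | .inl (s, t) => (if n + s < min (n + t : ℕ) (A - 1) then n + s else n + s + 1, n + t)
  | .inr (.inl (s, t)) => (2 * s, n + t)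
  | .inr (.inr (s, t)) => (n + t, 2 * s)

theorem freeCell_injective (A B n : ℕ) : Function.Injective (freeCell A B n) := by
  rintro (⟨⟨s, hs⟩, ⟨t, ht⟩⟩ | ⟨⟨s, hs⟩, ⟨t, ht⟩⟩ | ⟨⟨s, hs⟩, ⟨t, ht⟩⟩)
    (⟨⟨s', hs'⟩, ⟨t', ht'⟩⟩ | ⟨⟨s', hs'⟩, ⟨t', ht'⟩⟩ | ⟨⟨s', hs'⟩, ⟨t', ht'⟩⟩) h <;>
  simp only [freeCell, Prod.mk.injEq] at h <;>
  simp only [Sum.inl.injEq, Sum.inr.injEq, Prod.mk.injEq, Fin.mk.injEq, reduceCtorEq] <;>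
  obtain ⟨h1, h2⟩ := h <;> (try split_ifs at h1) <;> omega

theorem isFreeCell_freeCell {A B n : ℕ} (hn : n < A) (hAB : A ≤ B) (s) :
    IsFreeCell A B n (freeCell A B n s).1 (freeCell A B n s).2 := by
  rcases s with ⟨⟨s, hs⟩, ⟨t, ht⟩⟩ | ⟨⟨s, hs⟩, ⟨t, ht⟩⟩ | ⟨⟨s, hs⟩, ⟨t, ht⟩⟩ <;>
  simp only [freeCell, IsFreeCell]
  · left
    split_ifs <;> omega
  · right; left
    omega
  · right; right
    omega

theorem exists_isGridPattern {ι : Type*} [Fintype ι] {A B n : ℕ} (act : ι → Prop)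
    [DecidablePred act] (hn : n < A) (hAB : A ≤ B) (hact : Fintype.card {i // act i} = n)
    (hcard : Fintype.card ι ≤ n + numFreeCells A B n) :
    ∃ p q : ι → ℕ, IsGridPattern A B n act p q := by
  let e : {i // act i} ≃ Fin n := Fintype.equivFinOfCardEq hact
  obtain ⟨f⟩ : Nonempty ({i // ¬ act i} ↪ _) :=
    Function.Embedding.nonempty_of_card_le
      (β := (Fin (A - n - 1) × Fin (B - n)) ⊕ (Fin (n / 2) × Fin (B - n - 1)) ⊕
        (Fin (n / 2) × Fin (A - n - 1))) <| by
      rw [Fintype.card_subtype_compl, hact]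
      simpa only [Fintype.card_sum, Fintype.card_prod, Fintype.card_fin,
        tsub_le_iff_left] using hcard
  refine ⟨fun i => if h : act i then e ⟨i, h⟩ else (freeCell A B n (f ⟨i, h⟩)).1,
    fun i => if h : act i then e ⟨i, h⟩ else (freeCell A B n (f ⟨i, h⟩)).2,
    hn, hAB, fun i hi => by simp [hi], fun i hi j hj hij => ?_, fun i hi => ?_,
    fun i j hi hj hp hq => ?_⟩
  · rw [Set.mem_ofPred_eq] at hi hj
    simp only [hi, hj, dif_pos] at hij
    simpa using e.injective (Fin.ext hij)
  · simpa only [hi, dif_neg, not_false_eq_true] using isFreeCell_freeCell hn hAB _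
  · simp only [hi, hj, dif_neg, not_false_eq_true] at hp hq
    simpa using f.injective (freeCell_injective A B n (Prod.ext hp hq))

theorem exists_isGridPattern_mod {A B C k : ℕ} (hA : 4 ≤ A) (hAB : A ≤ B) (hBC : B ≤ C)
    (hk : k * (A + B + C - 2) + C * (A + B + C - 2) ≤ A * B * C) (j : ℕ) :
    ∃ (n : ℕ) (p q : Fin k → ℕ),
      IsGridPattern A B n (fun i : Fin k => (i : ℕ) % (C / 2) = j) p q := by
  obtain ⟨hlt, hle⟩ :=
    lt_and_le_add_numFreeCells hA hAB hBC hk (card_mod_eq_le (j := j) (by omega))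
  exact ⟨_, exists_isGridPattern _ hlt hAB rfl (by simpa only [Fintype.card_fin] using hle)⟩

end GridPattern

section GenericConfiguration

open MvPolynomial

universe r

variable {ι α β γ J F : Type*} [Field F]

/-- The configuration whose coordinates are independent variables. -/
abbrev genericConfig (ι α β γ F : Type*) [Field F] :
    ι → α ⊕ β ⊕ γ → MvPolynomial (ι × (α ⊕ β ⊕ γ)) F :=
  fun i s => X (i, s)

theorem mapConfig_block {R S : Type*} [CommRing R] [CommRing S] (f : R →+* S) (π : γ → J) (j : J)
    (P : ι → α ⊕ β ⊕ γ → R) : mapConfig f (block π j P) = block π j (mapConfig f P) :=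
  rfl

theorem mapConfig_genericConfig_of_ker_eq {κ : Type*} [Field κ] {Q : ι → α ⊕ β ⊕ γ → F}
    {χ : MvPolynomial (ι × (α ⊕ β ⊕ γ)) F →+* κ}
    (hχ : RingHom.ker χ = RingHom.ker (eval fun s => Q s.1 s.2)) :
    mapConfig χ (genericConfig ι α β γ F) = mapConfig (χ.comp C) Q := by
  funext i s
  have : X (i, s) - C (Q i s) ∈ RingHom.ker χ := by simp [hχ]
  rwa [RingHom.mem_ker, map_sub, sub_eq_zero] at this

variable {π : γ → J} {g : ι → J}

/-- The substitution killing the third coordinates of each point outside of its block. -/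
def killOffBlock [DecidableEq J] (α β F : Type*) [Field F] (π : γ → J) (g : ι → J) :
    MvPolynomial (ι × (α ⊕ β ⊕ γ)) F →+* MvPolynomial (ι × (α ⊕ β ⊕ γ)) F :=
  eval₂Hom C fun s => Sum.elim (fun _ => X s)
    (Sum.elim (fun _ => X s) fun z => if π z = g s.1 then X s else 0) s.2

theorem eval_comp_killOffBlock [DecidableEq J] {Q : ι → α ⊕ β ⊕ γ → F}
    (hQ : IsBlockSupported π g Q) :
    (eval fun s => Q s.1 s.2).comp (killOffBlock α β F π g) = eval fun s => Q s.1 s.2 := by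
  refine ringHom_ext (by simp [killOffBlock]) ?_
  rintro ⟨i, x | y | z⟩
  · simp [killOffBlock]
  · simp [killOffBlock]
  · have := hQ.eq_of_ne_zero i z
    by_cases hz : π z = g i
    · simp [killOffBlock, hz]
    · simp [killOffBlock, hz, not_not.mp (mt this hz)]

variable [Fintype ι] [Finite α] [Finite β] [Finite γ]

theorem good_block_of_ker_eq_killOffBlock [DecidableEq J] {j : J} {Q : ι → α ⊕ β ⊕ γ → F}
    (hl : ∀ i, left (Q i) ≠ 0) (hm : ∀ i, mid (Q i) ≠ 0) (hQ : IsBlockSupported π g Q)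
    (hgood : ∀ (κ : Type r) [Field κ] (f : F →+* κ), Good (block π j (mapConfig f Q)))
    {κ : Type r} [Field κ] {χ : MvPolynomial (ι × (α ⊕ β ⊕ γ)) F →+* κ}
    (hχ : RingHom.ker χ = RingHom.ker (killOffBlock α β F π g)) :
    Good (block π j (mapConfig χ (genericConfig ι α β γ F))) := by
  have hker : RingHom.ker χ ≤ RingHom.ker (eval fun s => Q s.1 s.2) := by
    rw [hχ, ← eval_comp_killOffBlock hQ]
    exact fun f hf => by simp [RingHom.mem_ker.mp hf]
  rw [← mapConfig_block]
  refine Good.of_specialization χ (eval fun s => Q s.1 s.2) hker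
    (fun i => ?_) (fun i => ?_) (fun i => ?_) fun κ _ χ' hχ' => ?_
  · simpa using Function.ne_iff.mp (hl i)
  · simpa using Function.ne_iff.mp (hm i)
  · by_cases hij : g i = j
    · obtain ⟨z, hz⟩ := Function.ne_iff.mp (hQ.right_ne_zero i)
      exact .inr ⟨⟨z, (hQ.eq_of_ne_zero i z hz).trans hij⟩, by simpa using hz⟩
    · refine .inl fun z => ?_
      have : X (i, .inr (.inr z.1)) ∈ RingHom.ker (killOffBlock α β F π g) := by
        simp [killOffBlock, z.2, Ne.symm hij]
      exact RingHom.mem_ker.mp (hχ ▸ this)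
  · rw [mapConfig_block, mapConfig_genericConfig_of_ker_eq hχ']
    exact hgood κ _

/-- The variables are first specialized to configurations in which the points are distributed over
blocks, and then each block to a special configuration of its own. -/
theorem Good.genericConfig_of_block
    (hspecial : ∀ j, ∃ Q : ι → α ⊕ β ⊕ γ → F, (∀ i, left (Q i) ≠ 0) ∧ (∀ i, mid (Q i) ≠ 0) ∧
      IsBlockSupported π g Q ∧
      ∀ (κ : Type r) [Field κ] (f : F →+* κ), Good (block π j (mapConfig f Q)))
    {K : Type r} [Field K] {φ : MvPolynomial (ι × (α ⊕ β ⊕ γ)) F →+* K}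
    (hφ : Function.Injective φ) : Good (mapConfig φ (genericConfig ι α β γ F)) := by
  classical
  choose Q hl hm hQ hgood using hspecial
  have hleft : ∀ i, ∃ x, killOffBlock α β F π g (X (i, .inl x)) ≠ 0 := fun i => by
    obtain ⟨x, -⟩ := Function.ne_iff.mp (hl (g i) i)
    exact ⟨x, by simp [killOffBlock]⟩
  have hmid : ∀ i, ∃ y, killOffBlock α β F π g (X (i, .inr (.inl y))) ≠ 0 := fun i => by
    obtain ⟨y, -⟩ := Function.ne_iff.mp (hm (g i) i)
    exact ⟨y, by simp [killOffBlock]⟩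
  have hright : ∀ i, ∃ z, killOffBlock α β F π g (X (i, .inr (.inr z))) ≠ 0 := fun i => by
    obtain ⟨z, hz⟩ := Function.ne_iff.mp ((hQ (g i)).right_ne_zero i)
    exact ⟨z, by simp [killOffBlock, (hQ (g i)).eq_of_ne_zero i z hz]⟩
  refine Good.of_specialization φ (killOffBlock α β F π g) (fun f hf => ?_)
    hleft hmid (fun i => .inr (hright i)) fun κ _ χ hχ => ?_
  · rw [(map_eq_zero_iff φ hφ).mp hf]
    exact zero_mem _
  have hχ_iff : ∀ f, χ f = 0 ↔ killOffBlock α β F π g f = 0 := fun f => by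
    rw [← RingHom.mem_ker, hχ, RingHom.mem_ker]
  refine IsBlockSupported.good (π := π) (g := g) ⟨fun i h => ?_, fun i z hz => ?_⟩
    (fun i h => ?_) (fun i h => ?_) fun j =>
      good_block_of_ker_eq_killOffBlock (hl j) (hm j) (hQ j) (hgood j) hχ
  · obtain ⟨z, hz⟩ := hright i
    exact hz ((hχ_iff _).mp (congrFun h z))
  · by_contra hne
    exact hz ((hχ_iff _).mpr (by simp [killOffBlock, hne]))
  · obtain ⟨x, hx⟩ := hleft i
    exact hx ((hχ_iff _).mp (congrFun h x))
  · obtain ⟨y, hy⟩ := hmid i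
    exact hy ((hχ_iff _).mp (congrFun h y))

end GenericConfiguration

section GridConfiguration

universe r

variable {A B C k n : ℕ} {p q : Fin k → ℕ} {K : Type*} [Field K]

/-- The configuration attached to a grid pattern of the indices congruent to `j` modulo `C / 2`: the
`i`-th point has third factor `(1, i)`, in the `i % (C / 2)`-th pair of coordinates. -/
def gridConfig (A B C n j : ℕ) (p q : Fin k → ℕ) (K : Type*) [Field K] :
    Fin k → Fin A ⊕ Fin B ⊕ Fin C → K := fun i =>
  Sum.elim ((boxSide n (fun i : Fin k => (i : ℕ) % (C / 2) = j) p i).indicator 1)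
    (Sum.elim ((boxSide n (fun i : Fin k => (i : ℕ) % (C / 2) = j) q i).indicator 1) fun z =>
      if (z : ℕ) / 2 = i % (C / 2) then if (z : ℕ) % 2 = 0 then 1 else (i : K) else 0)

theorem mapConfig_gridConfig {S : Type*} [Field S] (f : K →+* S) (j : ℕ) :
    mapConfig f (gridConfig A B C n j p q K) = gridConfig A B C n j p q S := by
  classical
  funext i s
  rcases s with x | y | z
  · simp [gridConfig, Set.indicator_apply, apply_ite f]
  · simp [gridConfig, Set.indicator_apply, apply_ite f]
  · simp [gridConfig, apply_ite f]

theorem right_block_gridConfig {j : ℕ} {i : Fin k} (hi : (i : ℕ) % (C / 2) = j)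
    (z : {z : Fin C // (z : ℕ) / 2 = j}) :
    right (block (fun z : Fin C => (z : ℕ) / 2) j (gridConfig A B C n j p q K) i) z =
      if (z : ℕ) % 2 = 0 then 1 else (i : K) := by
  simp [gridConfig, hi, z.2]

theorem isBlockSupported_gridConfig (hC : 2 ≤ C) (j : ℕ) :
    IsBlockSupported (fun z : Fin C => (z : ℕ) / 2) (fun i : Fin k => (i : ℕ) % (C / 2))
      (gridConfig A B C n j p q K) where
  right_ne_zero i h := by
    have := Nat.mod_lt (i : ℕ) (by omega : 0 < C / 2)
    simpa [gridConfig] using congrFun h ⟨2 * (i % (C / 2)), by omega⟩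
  eq_of_ne_zero i z hz := by
    by_contra hne
    exact hz (by simp [gridConfig, hne])

theorem activeIndep_gridConfig [CharZero K] (hC : 2 ≤ C) (j : ℕ) :
    ActiveIndep (fun i : Fin k => (i : ℕ) % (C / 2) = j) fun i =>
      right (block (fun z : Fin C => (z : ℕ) / 2) j (gridConfig A B C n j p q K) i) where
  eq_zero i hi := (isBlockSupported_gridConfig hC j).right_block_eq_zero (Ne.symm hi)
  ne_zero i hi := (isBlockSupported_gridConfig hC j).right_block_ne_zero_iff.mpr hi.symm
  indep i i' hi hi' hne := by
    have := Nat.mod_lt (i : ℕ) (by omega : 0 < C / 2)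
    refine LinearIndependent.pair_iff.mpr fun s t hst => ?_
    have hfst := congrFun hst ⟨⟨2 * j, by omega⟩, by simp⟩
    have hsnd := congrFun hst ⟨⟨2 * j + 1, by omega⟩, by simp; omega⟩
    simp only [Pi.add_apply, Pi.smul_apply, right_block_gridConfig hi, right_block_gridConfig hi',
      smul_eq_mul, Pi.zero_apply, Nat.mul_mod_right, Nat.mul_add_mod, one_ne_zero, if_true,
      if_false, mul_one, Nat.one_mod] at hfst hsnd
    have hne' : (i : K) - i' ≠ 0 := sub_ne_zero.mpr fun h => hne (Fin.ext (Nat.cast_injective h))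
    obtain rfl : t = -s := by linear_combination hfst
    have hs : s = 0 := (mul_eq_zero.mp (by linear_combination hsnd :
      s * ((i : K) - i') = 0)).resolve_right hne'
    exact ⟨hs, by rw [hs, neg_zero]⟩

theorem good_block_gridConfig [CharZero K] (hC : 2 ≤ C) {j : ℕ}
    (h : IsGridPattern A B n (fun i : Fin k => (i : ℕ) % (C / 2) = j) p q) :
    Good (block (fun z : Fin C => (z : ℕ) / 2) j (gridConfig A B C n j p q K)) :=
  IsSpecial.good ⟨h.isPattern, fun _ => rfl, fun _ => rfl, activeIndep_gridConfig hC j⟩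

theorem good_genericConfig (hA : 4 ≤ A) (hAB : A ≤ B) (hBC : B ≤ C)
    (hk : k * (A + B + C - 2) + C * (A + B + C - 2) ≤ A * B * C) {F : Type*} [Field F] [CharZero F]
    {K : Type r} [Field K] {φ : MvPolynomial (Fin k × (Fin A ⊕ Fin B ⊕ Fin C)) F →+* K}
    (hφ : Function.Injective φ) :
    Good (mapConfig φ (genericConfig (Fin k) (Fin A) (Fin B) (Fin C) F)) := by
  refine Good.genericConfig_of_block (π := fun z : Fin C => (z : ℕ) / 2)
    (g := fun i : Fin k => (i : ℕ) % (C / 2)) (fun j => ?_) hφ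
  obtain ⟨n, p, q, h⟩ := exists_isGridPattern_mod hA hAB hBC hk j
  refine ⟨gridConfig A B C n j p q F, fun i => ?_, fun i => ?_,
    isBlockSupported_gridConfig (by omega) j, fun κ _ f => ?_⟩
  · exact Function.ne_iff.mpr ⟨⟨p i, h.left_lt i⟩, by simp [gridConfig, boxSide]⟩
  · exact Function.ne_iff.mpr ⟨⟨q i, h.right_lt i⟩, by simp [gridConfig, boxSide]⟩
  · have : CharZero κ := charZero_of_injective_ringHom f.injective
    rw [mapConfig_gridConfig]
    exact good_block_gridConfig (by omega) h

end GridConfiguration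

section Derivation

theorem formallySmooth_of_injective {S K : Type*} [CommRing S] [IsDomain S] [CharZero S] [Field K]
    {f : S →+* K} (hf : Function.Injective f) : f.FormallySmooth := by
  algebraize [f]
  have : FaithfulSMul S K := (faithfulSMul_iff_algebraMap_injective S K).mpr hf
  let _ := FractionRing.liftAlgebra S K
  have : IsScalarTower S (FractionRing S) K := FractionRing.isScalarTower_liftAlgebra S K
  have : CharZero (FractionRing S) :=
    charZero_of_injective_algebraMap (IsFractionRing.injective S _)
  obtain ⟨_, b, hb⟩ := exists_isTranscendenceBasis' (FractionRing S) K
  have := hb.isAlgebraic_field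
  have : Algebra.FormallySmooth (FractionRing S) K :=
    .of_algebraicIndependent_of_isSeparable hb.1
  have : Algebra.FormallySmooth S (FractionRing S) := .of_isLocalization (nonZeroDivisors S)
  exact Algebra.FormallySmooth.comp S (FractionRing S) K

theorem exists_section_of_formallySmooth {S K B : Type*} [CommRing S] [CommRing K] [CommRing B]
    {f : S →+* K} (hf : f.FormallySmooth) {h : S →+* B} {π : B →+* K}
    (hπ : Function.Surjective π) (hker : IsNilpotent (RingHom.ker π)) (hcomp : π.comp h = f) :
    ∃ θ : K →+* B, π.comp θ = RingHom.id K ∧ θ.comp f = h := by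
  algebraize [f, h]
  let πS : B →ₐ[S] K := { π with commutes' := RingHom.congr_fun hcomp }
  let θ := Algebra.FormallySmooth.liftOfSurjective (AlgHom.id S K) πS hπ hker
  exact ⟨θ, RingHom.ext (Algebra.FormallySmooth.liftOfSurjective_apply (AlgHom.id S K) πS hπ hker),
    θ.comp_algebraMap⟩

open MvPolynomial TrivSqZeroExt in
/-- A field extension of `F` in characteristic zero is formally smooth over any polynomial ring it
contains, so its derivations can be prescribed on the variables. -/
theorem exists_derivation_apply_eq {σ F K : Type*} [Field F] [CharZero F] [Field K]
    {φ : MvPolynomial σ F →+* K} (hφ : Function.Injective φ) (d : σ → K) :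
    ∃ D : Derivation ℤ K K, ∀ s, D (φ (X s)) = d s := by
  let g : MvPolynomial σ F →+* TrivSqZeroExt K K :=
    eval₂Hom ((inlHom K K).comp (φ.comp C)) fun s => inl (φ (X s)) + inr (d s)
  have hg : (fstHom ℤ K K : TrivSqZeroExt K K →+* K).comp g = φ :=
    ringHom_ext (by simp [g]) (by simp [g])
  obtain ⟨θ, hθ, hθφ⟩ := exists_section_of_formallySmooth (formallySmooth_of_injective hφ)
    (fun x => ⟨inl x, by simp⟩) ⟨2, kerIdeal_sq K K⟩ hg
  have hfst : ∀ x, (θ x).fst = x := RingHom.congr_fun hθ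
  refine ⟨Derivation.mk' (AddMonoidHom.toIntLinearMap
    ((sndHom K K : TrivSqZeroExt K K →+ K).comp θ)) fun a b => ?_, fun s => ?_⟩
  · simp [hfst, mul_comm]
  · have := congrArg snd (RingHom.congr_fun hθφ (X s))
    simpa [g] using this

end Derivation

section Relations

variable {ι α β γ K : Type*} [Field K]

/-- The relations between the tangent spaces at the points `P i` that come from the three copies of
`P i` in its own tangent space. -/
def trivialRelations (P : ι → α ⊕ β ⊕ γ → K) : (ι → K × K) →ₗ[K] (ι → α ⊕ β ⊕ γ → K) where
  toFun t i := rescale (t i).1 (t i).2 (-((t i).1 + (t i).2)) (P i)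
  map_add' s t := by
    ext i (x | y | z) <;> simp <;> ring
  map_smul' c t := by
    ext i (x | y | z) <;> simp <;> ring

theorem trivialRelations_injective {P : ι → α ⊕ β ⊕ γ → K} (hl : ∀ i, left (P i) ≠ 0)
    (hm : ∀ i, mid (P i) ≠ 0) : Function.Injective (trivialRelations P) := by
  rw [injective_iff_map_eq_zero]
  intro t ht
  ext i
  · exact (smul_eq_zero.mp (congrArg left (congrFun ht i))).resolve_right (hl i)
  · exact (smul_eq_zero.mp (congrArg mid (congrFun ht i))).resolve_right (hm i)

variable [Fintype ι]

theorem range_trivialRelations_le (P : ι → α ⊕ β ⊕ γ → K) :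
    LinearMap.range (trivialRelations P) ≤ LinearMap.ker (tangentMap P) := by
  rintro _ ⟨t, rfl⟩
  simp [tangentMap_apply, trivialRelations, segreDeriv_rescale]

theorem IsIndep.ker_tangentMap_le {P : ι → α ⊕ β ⊕ γ → K} (hP : IsIndep P)
    (hr : ∀ i, right (P i) ≠ 0) :
    LinearMap.ker (tangentMap P) ≤ LinearMap.range (trivialRelations P) := by
  intro D hD
  choose l m n hsum h using fun i => (hP D hD i).2 (hr i)
  refine ⟨fun i => (l i, m i), funext fun i => ?_⟩
  rw [h i, eq_neg_of_add_eq_zero_right (hsum i)]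
  rfl

theorem IsIndep.range_tangentMap_eq [Finite α] [Finite β] [Finite γ] {P Q : ι → α ⊕ β ⊕ γ → K}
    (hP : IsIndep P) (hr : ∀ i, right (P i) ≠ 0) (hl : ∀ i, left (Q i) ≠ 0)
    (hm : ∀ i, mid (Q i) ≠ 0)
    (hle : LinearMap.range (tangentMap P) ≤ LinearMap.range (tangentMap Q)) :
    LinearMap.range (tangentMap P) = LinearMap.range (tangentMap Q) := by
  have rank_P := LinearMap.finrank_range_add_finrank_ker (tangentMap P)
  have rank_Q := LinearMap.finrank_range_add_finrank_ker (tangentMap Q)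
  have ker_P := (Submodule.finrank_mono (hP.ker_tangentMap_le hr)).trans
    (LinearMap.finrank_range_le _)
  have ker_Q := Submodule.finrank_mono (range_trivialRelations_le Q)
  rw [LinearMap.finrank_range_of_inj (trivialRelations_injective hl hm)] at ker_Q
  exact Submodule.eq_of_le_of_finrank_le hle (by omega)

end Relations

section Rigidity

variable {ι α β γ K : Type*} [Field K]

/-- The three factors of a point are nonzero, so that it represents a decomposable tensor. -/
structure FactorsNeZero (Q : α ⊕ β ⊕ γ → K) : Prop where
  left : left Q ≠ 0
  mid : mid Q ≠ 0
  right : right Q ≠ 0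

variable [Fintype ι]

/-- The decomposable tensors represented by the points `P i` are linearly independent, and up to
scalars they are the only ones occurring in decompositions of their sum. -/
structure IsRigid (P : ι → α ⊕ β ⊕ γ → K) : Prop where
  factors_ne_zero : ∀ i, FactorsNeZero (P i)
  linearIndependent : LinearIndependent K fun i => segre (P i)
  exists_eq_rescale : ∀ Q : ι → α ⊕ β ⊕ γ → K, (∀ j, FactorsNeZero (Q j)) →
    ∑ j, segre (Q j) = ∑ i, segre (P i) → ∀ j, ∃ i, ∃ l m n : K, Q j = rescale l m n (P i)

theorem IsIndep.linearIndependent {P : ι → α ⊕ β ⊕ γ → K} (hP : IsIndep P)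
    (hne : ∀ i, FactorsNeZero (P i)) : LinearIndependent K fun i => segre (P i) := by
  rw [Fintype.linearIndependent_iff]
  intro t ht i
  have hrel : tangentMap P (fun i => rescale (t i) 0 0 (P i)) = 0 := by
    simpa [tangentMap_apply, segreDeriv_rescale] using ht
  obtain ⟨l, m, n, hsum, h⟩ := (hP _ hrel i).2 (hne i).right
  have hl : (t i - l) • left (P i) = 0 := by
    rw [sub_smul, sub_eq_zero]
    exact congrArg left h
  have hm : m = 0 :=
    (smul_eq_zero.mp ((congrArg mid h).symm.trans (zero_smul K _))).resolve_right (hne i).mid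
  have hn : n = 0 :=
    (smul_eq_zero.mp ((congrArg right h).symm.trans (zero_smul K _))).resolve_right (hne i).right
  have := (smul_eq_zero.mp hl).resolve_right (hne i).left
  linear_combination this + hsum - hm - hn

theorem derivation_comp_segre (D : Derivation ℤ K K) (Q : α ⊕ β ⊕ γ → K) :
    D ∘ segre Q = segreDeriv Q (D ∘ Q) := by
  ext x
  simp only [Function.comp_apply, segre, segreDeriv_apply, Derivation.leibniz, smul_eq_mul]
  ring

open MvPolynomial in
/-- The idea is to differentiate the equation between the two sums. -/
theorem range_tangentMap_genericConfig_le {F : Type*} [Field F] [CharZero F]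
    {φ : MvPolynomial (ι × (α ⊕ β ⊕ γ)) F →+* K} (hφ : Function.Injective φ)
    {Q : ι → α ⊕ β ⊕ γ → K}
    (hsum : ∑ j, segre (Q j) = ∑ i, segre (mapConfig φ (genericConfig ι α β γ F) i)) :
    LinearMap.range (tangentMap (mapConfig φ (genericConfig ι α β γ F))) ≤
      LinearMap.range (tangentMap Q) := by
  rintro _ ⟨E, rfl⟩
  obtain ⟨D, hD⟩ := exists_derivation_apply_eq hφ fun s => E s.1 s.2
  have map_sum_segre (P : ι → α ⊕ β ⊕ γ → K) :
      D ∘ (∑ i, segre (P i)) = tangentMap P fun i => D ∘ P i := by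
    simp only [tangentMap_apply, ← derivation_comp_segre]
    ext x
    simp
  have hE : (fun i => D ∘ mapConfig φ (genericConfig ι α β γ F) i) = E :=
    funext fun i => funext fun s => hD (i, s)
  exact ⟨fun j => D ∘ Q j, by rw [← map_sum_segre, hsum, map_sum_segre, hE]⟩

theorem Good.isRigid_genericConfig [Finite α] [Finite β] [Finite γ] [Nonempty α] [Nonempty β]
    [Nonempty γ] {F : Type*} [Field F] [CharZero F]
    {φ : MvPolynomial (ι × (α ⊕ β ⊕ γ)) F →+* K} (hφ : Function.Injective φ)
    (hg : Good (mapConfig φ (genericConfig ι α β γ F))) :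
    IsRigid (mapConfig φ (genericConfig ι α β γ F)) := by
  have entry_ne (i : ι) (s : α ⊕ β ⊕ γ) : mapConfig φ (genericConfig ι α β γ F) i s ≠ 0 :=
    (map_ne_zero_iff φ hφ).mpr (MvPolynomial.X_ne_zero _)
  have hne (i : ι) : FactorsNeZero (mapConfig φ (genericConfig ι α β γ F) i) :=
    ⟨fun h => entry_ne i _ (congrFun h (Classical.arbitrary α)),
      fun h => entry_ne i _ (congrFun h (Classical.arbitrary β)),
      fun h => entry_ne i _ (congrFun h (Classical.arbitrary γ))⟩
  refine ⟨hne, hg.indep.linearIndependent hne, fun Q hQ hsum j => ?_⟩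
  have hrange := hg.indep.range_tangentMap_eq (fun i => (hne i).right) (fun i => (hQ i).left)
    (fun i => (hQ i).mid) (range_tangentMap_genericConfig_le hφ hsum)
  obtain ⟨i, -, h⟩ := hg.contact (Q j) (hQ j).left (hQ j).mid (hQ j).right
    ((range_segreDeriv_le Q j).trans hrange.ge)
  exact ⟨i, h⟩

theorem bijective_of_sum_fiber_eq_one [DecidableEq ι] {f : ι → ι} {t : ι → K}
    (h : ∀ i, ∑ j with f j = i, t j = 1) : Function.Bijective f := by
  refine Finite.surjective_iff_bijective.mp fun i => ?_
  obtain ⟨j, hj, -⟩ := Finset.exists_ne_zero_of_sum_ne_zero ((h i).trans_ne one_ne_zero)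
  exact ⟨j, (Finset.mem_filter.mp hj).2⟩

theorem IsRigid.exists_perm {P Q : ι → α ⊕ β ⊕ γ → K} (hP : IsRigid P)
    (hQ : ∀ j, FactorsNeZero (Q j)) (hsum : ∑ j, segre (Q j) = ∑ i, segre (P i)) :
    ∃ σ : Equiv.Perm ι, ∀ j, ∃ l m n : K, l * m * n = 1 ∧ Q j = rescale l m n (P (σ j)) := by
  classical
  choose f l m n h using hP.exists_eq_rescale Q hQ hsum
  have hfiber (i : ι) : ∑ j with f j = i, l j * m j * n j = 1 := by
    refine hP.linearIndependent.eq_coords_of_eq (f := fun i => ∑ j with f j = i, l j * m j * n j)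
      (g := fun _ => 1) ?_ i
    simp_rw [one_smul, ← hsum, ← Finset.sum_fiberwise Finset.univ f fun j => segre (Q j)]
    refine Finset.sum_congr rfl fun i _ => ?_
    rw [Finset.sum_smul]
    refine Finset.sum_congr rfl fun j hj => ?_
    rw [h j, segre_rescale, (Finset.mem_filter.mp hj).2]
  have hf := bijective_of_sum_fiber_eq_one hfiber
  refine ⟨.ofBijective f hf, fun j => ⟨l j, m j, n j, ?_, h j⟩⟩
  have := hfiber (f j)
  rwa [Finset.sum_filter, Finset.sum_congr rfl fun j' _ => by rw [hf.1.eq_iff], Finset.sum_ite_eq',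
    if_pos (Finset.mem_univ j)] at this

end Rigidity

section Ultraproduct

open MvPolynomial Filter

variable {I σ ι α β γ K : Type*} [Field K] {U : Ultrafilter I}

theorem exists_generic_ultrafilter (p : I → σ → K)
    (h : ∀ F : MvPolynomial σ K, F ≠ 0 → ∃ i, eval (p i) F ≠ 0) :
    ∃ U : Ultrafilter I, ∀ F : MvPolynomial σ K, F ≠ 0 → ∀ᶠ i in U, eval (p i) F ≠ 0 := by
  classical
  obtain ⟨U, hU⟩ := Ultrafilter.exists_ultrafilter_of_finite_inter_nonempty
    (Set.range fun F : {F : MvPolynomial σ K // F ≠ 0} => {i | eval (p i) F.1 ≠ 0}) (by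
      intro T hT
      rw [← Set.image_univ] at hT
      obtain ⟨T', -, rfl⟩ := Finset.subset_set_image_iff.mp hT
      obtain ⟨i, hi⟩ := h (∏ F ∈ T', F.1) (Finset.prod_ne_zero_iff.mpr fun F _ => F.2)
      rw [map_prod, Finset.prod_ne_zero_iff] at hi
      refine ⟨i, ?_⟩
      simp only [Finset.coe_image, Set.sInter_image, Set.mem_iInter]
      exact fun F hF => hi F hF)
  exact ⟨U, fun F hF => hU ⟨⟨F, hF⟩, rfl⟩⟩

/-- A family of vectors, viewed as a vector of germs. -/
def germVec (U : Ultrafilter I) (x : I → σ → K) (s : σ) : Germ (U : Filter I) K :=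
  Germ.coeRingHom (U : Filter I) fun i => x i s

theorem germVec_eq_iff [Finite σ] {x y : I → σ → K} :
    germVec U x = germVec U y ↔ ∀ᶠ i in U, x i = y i := by
  simp only [funext_iff, eventually_all]
  exact forall_congr' fun s => Germ.coe_eq

theorem germVec_ne_zero [Finite σ] {x : I → σ → K} (h : ∀ᶠ i in U, x i ≠ 0) :
    germVec U x ≠ 0 := fun h0 => by
  have h0' : ∀ᶠ i in U, x i = 0 := germVec_eq_iff.mp h0
  obtain ⟨i, hi, hi'⟩ := (h.and h0').exists
  exact hi hi'

theorem eventually_ne_zero_of_germVec_ne_zero [Finite σ] {x : I → σ → K} (h : germVec U x ≠ 0) :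
    ∀ᶠ i in U, x i ≠ 0 :=
  Ultrafilter.eventually_not.mpr fun h0 => h (germVec_eq_iff (y := fun _ => 0).mpr h0)

theorem sum_smul_segre_germVec [Fintype ι] (t : I → ι → K)
    (P : I → ι → α ⊕ β ⊕ γ → K) :
    ∑ j, germVec U t j • segre (germVec U fun i => P i j) =
      germVec U fun i => ∑ j, t i j • segre (P i j) := by
  ext x
  simp only [Finset.sum_apply, Pi.smul_apply, smul_eq_mul, segre, germVec, ← map_mul, ← map_sum]
  congr 1
  ext i
  simp

theorem sum_segre_germVec [Fintype ι] (P : I → ι → α ⊕ β ⊕ γ → K) :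
    ∑ j, segre (germVec U fun i => P i j) = germVec U fun i => ∑ j, segre (P i j) := by
  ext x
  simp only [Finset.sum_apply, segre, germVec, ← map_mul, ← map_sum]
  congr 1
  ext i
  simp

variable [Finite α] [Finite β] [Finite γ] {P : I → ι → α ⊕ β ⊕ γ → K}

theorem FactorsNeZero.germVec {Q : I → α ⊕ β ⊕ γ → K}
    (h : ∀ᶠ i in U, FactorsNeZero (Q i)) : FactorsNeZero (germVec U Q) where
  left := germVec_ne_zero (h.mono fun _ hi => hi.left)
  mid := germVec_ne_zero (h.mono fun _ hi => hi.mid)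
  right := germVec_ne_zero (h.mono fun _ hi => hi.right)

theorem FactorsNeZero.eventually {Q : I → α ⊕ β ⊕ γ → K}
    (h : FactorsNeZero (SegreContact.germVec U Q)) : ∀ᶠ i in U, FactorsNeZero (Q i) := by
  have hl := eventually_ne_zero_of_germVec_ne_zero (x := fun i => SegreContact.left (Q i)) h.left
  have hm := eventually_ne_zero_of_germVec_ne_zero (x := fun i => SegreContact.mid (Q i)) h.mid
  have hr := eventually_ne_zero_of_germVec_ne_zero (x := fun i => SegreContact.right (Q i)) h.right
  filter_upwards [hl, hm, hr] with i hl hm hr using ⟨hl, hm, hr⟩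

theorem eventually_exists_eq_rescale {Q : I → α ⊕ β ⊕ γ → K}
    (h : ∃ j, ∃ l m n : Germ (U : Filter I) K,
      germVec U Q = rescale l m n (germVec U fun i => P i j)) :
    ∀ᶠ i in U, ∃ j, ∃ l m n : K, Q i = rescale l m n (P i j) := by
  obtain ⟨j, l, m, n, h⟩ := h
  induction l, m, n using Germ.inductionOn₃ with | _ l m n
  have hQ : germVec U Q = germVec U fun i => rescale (l i) (m i) (n i) (P i j) := by
    rw [h]
    ext (x | y | z) <;> rfl
  filter_upwards [germVec_eq_iff.mp hQ] with i hi using ⟨j, l i, m i, n i, hi⟩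

theorem eventually_linearIndependent_segre [Finite ι]
    (h : LinearIndependent (Germ (U : Filter I) K) fun j => segre (germVec U fun i => P i j)) :
    ∀ᶠ i in U, LinearIndependent K fun j => segre (P i j) := by
  cases nonempty_fintype ι
  by_contra hcon
  rw [← Ultrafilter.eventually_not] at hcon
  simp only [Fintype.not_linearIndependent_iff] at hcon
  obtain ⟨t, ht⟩ := hcon.choice
  have ht0 : germVec U t = 0 := funext (Fintype.linearIndependent_iff.mp h _ (by
    rw [sum_smul_segre_germVec]
    exact germVec_eq_iff (y := fun _ => 0).mpr (ht.mono fun i hi => hi.1)))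
  have hne : ∀ᶠ i in U, t i ≠ 0 := ht.mono fun i ⟨_, j, hj⟩ h0 => hj (congrFun h0 j)
  exact germVec_ne_zero hne ht0

variable [Fintype ι]

theorem IsRigid.eventually (h : IsRigid fun j => germVec U fun i => P i j) :
    ∀ᶠ i in U, IsRigid (P i) := by
  suffices ∀ᶠ i in U, ∀ Q : ι → α ⊕ β ⊕ γ → K, (∀ j, FactorsNeZero (Q j)) →
      ∑ j, segre (Q j) = ∑ j, segre (P i j) →
      ∀ j, ∃ i', ∃ l m n : K, Q j = rescale l m n (P i i') by
    filter_upwards [eventually_all.mpr fun j => (h.factors_ne_zero j).eventually,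
      eventually_linearIndependent_segre h.linearIndependent, this] with i h₁ h₂ h₃
    exact ⟨h₁, h₂, h₃⟩
  by_contra hcon
  rw [← Ultrafilter.eventually_not] at hcon
  push Not at hcon
  obtain ⟨Q, hQ⟩ := hcon.choice
  have hsum : ∑ j, segre (germVec U fun i => Q i j) = ∑ j, segre (germVec U fun i => P i j) := by
    simp only [sum_segre_germVec]
    exact germVec_eq_iff.mpr (hQ.mono fun i hi => hi.2.1)
  have hQP := h.exists_eq_rescale _
    (fun j => .germVec (hQ.mono fun i hi => hi.1 j)) hsum
  obtain ⟨i, ⟨-, -, j, hj⟩, hi⟩ :=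
    (hQ.and (eventually_all.mpr fun j => eventually_exists_eq_rescale (hQP j))).exists
  obtain ⟨i', l, m, n, h⟩ := hi j
  exact hj i' l m n h

end Ultraproduct

section GeneralConfiguration

open MvPolynomial Filter

variable {I σ ι α β γ K : Type*} [Field K] {U : Ultrafilter I}

/-- Evaluation of polynomials along a family of points, as germs. -/
def evalGerm (U : Ultrafilter I) (p : I → σ → K) : MvPolynomial σ K →+* Germ (U : Filter I) K :=
  (Germ.coeRingHom (U : Filter I)).comp (RingHom.pi fun i => eval (p i))

theorem evalGerm_injective {p : I → σ → K}
    (h : ∀ F : MvPolynomial σ K, F ≠ 0 → ∀ᶠ i in U, eval (p i) F ≠ 0) :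
    Function.Injective (evalGerm U p) := by
  rw [injective_iff_map_eq_zero]
  intro F hF
  by_contra hne
  have hF' : ∀ᶠ i in U, eval (p i) F = 0 := Germ.coe_eq.mp hF
  obtain ⟨i, hi, hi'⟩ := (hF'.and (h F hne)).exists
  exact hi' hi

theorem mapConfig_evalGerm_genericConfig (p : I → ι × (α ⊕ β ⊕ γ) → K) :
    mapConfig (evalGerm U p) (genericConfig ι α β γ K) =
      fun j => germVec U fun i => Function.curry (p i) j := by
  ext j s
  exact congrArg (Germ.coeRingHom (U : Filter I)) (funext fun i => eval_X (j, s))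

theorem exists_ne_zero_and_isRigid {A B C k : ℕ} [CharZero K] (hA : 4 ≤ A) (hAB : A ≤ B)
    (hBC : B ≤ C) (hk : k * (A + B + C - 2) + C * (A + B + C - 2) ≤ A * B * C) :
    ∃ F : MvPolynomial (Fin k × (Fin A ⊕ Fin B ⊕ Fin C)) K, F ≠ 0 ∧
      ∀ p, eval p F ≠ 0 → IsRigid (Function.curry p) := by
  by_contra! hcon
  have : NeZero A := ⟨by omega⟩
  have : NeZero B := ⟨by omega⟩
  have : NeZero C := ⟨by omega⟩
  obtain ⟨U, hU⟩ := exists_generic_ultrafilter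
    (Subtype.val : {p : Fin k × (Fin A ⊕ Fin B ⊕ Fin C) → K // ¬ IsRigid (Function.curry p)} → _)
    fun F hF => by
      obtain ⟨p, hp, hp'⟩ := hcon F hF
      exact ⟨⟨p, hp'⟩, hp⟩
  have hφ := evalGerm_injective hU
  have hrigid := (good_genericConfig hA hAB hBC hk hφ).isRigid_genericConfig hφ
  rw [mapConfig_evalGerm_genericConfig] at hrigid
  obtain ⟨p, hp⟩ := hrigid.eventually.exists
  exact p.2 hp

end GeneralConfiguration

section Tensors

open MvPolynomial

variable {a b c k : ℕ}

/-- The coordinates on the factors of a point, indexed as in `segre` and as in `WIdx`. -/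
def factorIndexEquiv (a b c : ℕ) :
    Fin (a + 1) ⊕ Fin (b + 1) ⊕ Fin (c + 1) ≃ Σ j : Fin 3, Fin (![a, b, c] j + 1) where
  toFun
    | .inl r => ⟨0, r⟩
    | .inr (.inl s) => ⟨1, s⟩
    | .inr (.inr t) => ⟨2, t⟩
  invFun
    | ⟨0, r⟩ => .inl r
    | ⟨1, s⟩ => .inr (.inl s)
    | ⟨2, t⟩ => .inr (.inr t)
  left_inv := by rintro (r | s | t) <;> rfl
  right_inv := by
    rintro ⟨j, r⟩
    fin_cases j <;> rfl

/-- The triple of factors `v`, encoded as in `segre`. -/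
def factorPoint (v : ∀ j : Fin 3, Fin (![a, b, c] j + 1) → ℂ) :
    Fin (a + 1) ⊕ Fin (b + 1) ⊕ Fin (c + 1) → ℂ :=
  fun s => v (factorIndexEquiv a b c s).1 (factorIndexEquiv a b c s).2

theorem factorsNeZero_factorPoint {v : ∀ j : Fin 3, Fin (![a, b, c] j + 1) → ℂ} :
    FactorsNeZero (factorPoint v) ↔ ∀ j, v j ≠ 0 := by
  refine ⟨fun h j => ?_, fun h => ⟨h 0, h 1, h 2⟩⟩
  fin_cases j
  exacts [h.left, h.mid, h.right]

/-- The index of a coordinate on tensors with three factors. -/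
def tripleIndex (x : Fin (a + 1) × Fin (b + 1) × Fin (c + 1)) : BIdx 3 ![a, b, c]
  | 0 => x.1
  | 1 => x.2.1
  | 2 => x.2.2

/-- The coordinates of a tensor with three factors in the standard basis. -/
def tensorCoords : Ten 3 ![a, b, c] →ₗ[ℂ] (Fin (a + 1) × Fin (b + 1) × Fin (c + 1) → ℂ) :=
  LinearMap.pi fun x => PiTensorProduct.lift
    ((MultilinearMap.mkPiAlgebra ℂ (Fin 3) ℂ).compLinearMap fun j =>
      LinearMap.proj (tripleIndex x j))

theorem tensorCoords_tprod (v : ∀ j : Fin 3, Fin (![a, b, c] j + 1) → ℂ) :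
    tensorCoords (tprod ℂ v) = segre (factorPoint v) := by
  ext x
  simp only [tensorCoords, LinearMap.pi_apply, PiTensorProduct.lift.tprod,
    MultilinearMap.compLinearMap_apply, MultilinearMap.mkPiAlgebra_apply, Fin.prod_univ_three]
  rfl

theorem tprod_eq_of_factorPoint_eq_rescale {v v' : ∀ j : Fin 3, Fin (![a, b, c] j + 1) → ℂ}
    {l m n : ℂ} (hlmn : l * m * n = 1) (h : factorPoint v = rescale l m n (factorPoint v')) :
    tprod ℂ v = tprod ℂ v' := by
  have hv : v = fun j => ![l, m, n] j • v' j := by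
    funext j
    fin_cases j
    exacts [congrArg left h, congrArg mid h, congrArg right h]
  rw [hv, MultilinearMap.map_smul_univ, Fin.prod_univ_three]
  exact (congrArg (· • tprod ℂ v') hlmn).trans (one_smul ℂ _)

theorem IsRigid.map_eq_map_tprod {p : Fin k → ∀ j : Fin 3, Fin (![a, b, c] j + 1) → ℂ}
    (hp : IsRigid fun i => factorPoint (p i)) {t : Fin k → Ten 3 ![a, b, c]}
    (ht : ∀ i, IsDecomposable (t i)) (hsum : ∑ i, t i = Phi _ p) :
    Finset.univ.val.map t = Finset.univ.val.map fun i => tprod ℂ (p i) := by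
  choose v hv htv using ht
  have hcoords : ∑ i, segre (factorPoint (v i)) = ∑ i, segre (factorPoint (p i)) := by
    simpa only [Phi, htv, map_sum, tensorCoords_tprod] using congrArg tensorCoords hsum
  obtain ⟨σ, hσ⟩ := hp.exists_perm (fun i => factorsNeZero_factorPoint.mpr (hv i)) hcoords
  have ht : t = (fun i => tprod ℂ (p i)) ∘ σ := by
    funext j
    obtain ⟨l, m, n, hlmn, h⟩ := hσ j
    exact (htv j).trans (tprod_eq_of_factorPoint_eq_rescale hlmn h)
  rw [ht, ← Multiset.map_map, Multiset.map_univ_val_equiv]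

theorem identifiable_of_isRigid
    {F : MvPolynomial (Fin k × (Fin (a + 1) ⊕ Fin (b + 1) ⊕ Fin (c + 1))) ℂ}
    (hF : F ≠ 0) (hrigid : ∀ f, eval f F ≠ 0 → IsRigid (Function.curry f)) :
    Identifiable 3 ![a, b, c] k := by
  have evalW_rename (p : Fin k → ∀ j : Fin 3, Fin (![a, b, c] j + 1) → ℂ) :
      evalW (rename (Prod.map id (factorIndexEquiv a b c)) F) p =
        eval (Function.uncurry fun i => factorPoint (p i)) F :=
    eval_rename ..
  refine ⟨rename (Prod.map id (factorIndexEquiv a b c)) F, ?_, fun p hp => ?_⟩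
  · obtain ⟨f, hf⟩ : ∃ f, eval f F ≠ 0 := by
      by_contra! h
      exact hF (MvPolynomial.funext fun f => by rw [h, map_zero])
    refine ⟨fun i j r => f (i, (factorIndexEquiv a b c).symm ⟨j, r⟩), ?_⟩
    rw [evalW_rename]
    simpa [factorPoint, Function.uncurry_def] using hf
  · have hp : IsRigid fun i => factorPoint (p i) :=
      hrigid (Function.uncurry fun i => factorPoint (p i)) (evalW_rename p ▸ hp)
    exact ⟨⟨fun i => tprod ℂ (p i),
        fun i => ⟨p i, factorsNeZero_factorPoint.mp (hp.factors_ne_zero i), rfl⟩, rfl⟩,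
      fun s t hs ht hs' ht' =>
        (hp.map_eq_map_tprod hs hs').trans (hp.map_eq_map_tprod ht ht').symm⟩

end Tensors

end SegreContact

/-- `ℙ^a × ℙ^b × ℙ^c`, `2 < a ≤ b ≤ c`, is `k`-identifiable
for `k ≤ (a+1)(b+1)(c+1)/(a+b+c+1) - c - 1`. -/
theorem stmt_12 (a b c : ℕ) (ha : 2 < a) (hab : a ≤ b) (hbc : b ≤ c)
    (k : ℕ) (hk : 0 < k)
    (hkb : (k : ℚ) ≤ ((a : ℚ) + 1) * ((b : ℚ) + 1) * ((c : ℚ) + 1) /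
      ((a : ℚ) + b + c + 1) - c - 1) :
    Identifiable 3 ![a, b, c] k := by
  have hpos : (0 : ℚ) < (a : ℚ) + b + c + 1 := by positivity
  have hbound : (k + (c + 1)) * (a + b + c + 1) ≤ (a + 1) * (b + 1) * (c + 1) := by
    have : (k : ℚ) + (c + 1) ≤
        ((a : ℚ) + 1) * (b + 1) * (c + 1) / ((a : ℚ) + b + c + 1) := by linarith
    rw [le_div_iff₀ hpos] at this
    exact_mod_cast this
  have hcount : k * (a + 1 + (b + 1) + (c + 1) - 2) + (c + 1) * (a + 1 + (b + 1) + (c + 1) - 2) ≤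
      (a + 1) * (b + 1) * (c + 1) := by
    rwa [← add_mul, show a + 1 + (b + 1) + (c + 1) - 2 = a + b + c + 1 by omega]
  obtain ⟨F, hF, hrigid⟩ := SegreContact.exists_ne_zero_and_isRigid (K := ℂ)
    (by omega) (by omega) (by omega) hcount
  exact SegreContact.identifiable_of_isRigid hF hrigid
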